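/- arXiv:1804.11092 — 3 statements merged into one kernel-verified Lean document; each statement's English description precedes it below -/
import Mathlib

section
/- Let D ⊂ ℝ³ be a bounded open set, x ∈ D, and u : D → ℝ bounded and Hölder continuous with some exponent α ∈ (0,1]. Then the Newtonian potential N(z) = ∫_D u(y)/(4π|z−y|) dy is twice differentiable at x and, for all i, j ∈ {1,2,3}: (∂²N/∂x_i∂x_j)(x) = p.v.∫_D ∂²/∂x_i∂x_j [ 1/(4π|x−y|) ] u(y) dy − (δ_{ij}/3) u(x), where the principal value is the limit over D∖B(x,ε) as ε → 0⁺ and B(x,ε) is the closed ball of center x and radius ε. -/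
open MeasureTheory Metric Filter Topology NNReal

/-!
The kernel `∂²(1/‖x - y‖)` has order `-3` and is not integrable near `x`, so the Newtonian potential
cannot be differentiated twice under the integral sign directly. Choose `ρ > 0` such that the ball of
radius `ρ` about `x` lies in `D`, let `b` be a smooth radial cutoff about `x`, equal to `1` on that
ball, and write `1_D u = w + u(x) b`.

The density `w` is bounded with bounded support, and by Hölder continuity `|w y| ≤ M ‖x - y‖ ^ α`.
This gain makes `∂²(1/‖x - y‖) w(y)` absolutely integrable. A general lemma on singular potentials
(`hasFDerivAt_potential`), used once at every point for the gradient and once at `x` for the Hessian,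
shows that the potential of `w` may be differentiated twice under the integral sign
(`exists_potential_hessian`).

For the cutoff, one derivative is moved onto `b`. The gradients of `b` and of the kernel are both
radial, so the Hessian at the centre is a multiple of the identity. Integrating the radial derivative
of `b` along rays from `1` to `0` identifies it as `-4π/3` times the identity
(`exists_bumpPotential_hessian`); this is the source of the term `-(δ_ij / 3) u(x)`.

Finally, `b` contributes nothing to the truncated integrals: the Hessian kernel has mean zero on
spheres and `b` is radial (`integral_newtH_bump`). The truncated integrals of `u` are therefore those
of `w`, and these converge to the full integral by dominated convergence.
-/

/-! ### Integrals of powers of the norm -/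

/-- Euclidean three-space. -/
abbrev E3 := EuclideanSpace ℝ (Fin 3)

lemma integrableOn_norm_rpow {s : ℝ} (hs : -3 < s) (r : ℝ) :
    IntegrableOn (fun v : E3 => ‖v‖ ^ s) (ball 0 r) := by
  rw [integrableOn_fun_norm_addHaar volume (f := fun t : ℝ => t ^ s)]
  have h := (intervalIntegral.intervalIntegrable_rpow' (a := 0) (b := r) (r := s + 2)
    (by linarith)).1
  refine (h.mono_set Set.Ioo_subset_Ioc_self).congr_fun (fun t ht => ?_) measurableSet_Ioo
  simp only [finrank_euclideanSpace, Fintype.card_fin, smul_eq_mul]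
  rw [show s + 2 = (2:ℕ) + s by push_cast; ring, Real.rpow_add ht.1, Real.rpow_natCast]

/-- Scaling of the integral of a power; at a non-integrable exponent both sides are the junk value
`0`. -/
lemma integral_ball_norm_rpow {s r : ℝ} (hr : 0 < r) :
    ∫ v in ball (0 : E3) r, ‖v‖ ^ s = r ^ (s + 3) * ∫ v in ball (0 : E3) 1, ‖v‖ ^ s := by
  have h := Measure.setIntegral_comp_smul_of_pos (volume : Measure E3)
    (fun v : E3 => ‖v‖ ^ s) (ball 0 1) hr
  simp only [norm_smul, Real.norm_of_nonneg hr.le, Real.mul_rpow hr.le (norm_nonneg _),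
    integral_const_mul, smul_unitBall_of_pos hr, finrank_euclideanSpace, Fintype.card_fin,
    smul_eq_mul] at h
  rw [Real.rpow_add hr, mul_right_comm, h]
  have : r ^ (3:ℝ) = r ^ 3 := by exact_mod_cast Real.rpow_natCast r 3
  rw [this]
  field_simp

lemma integrableOn_ball_norm_sub_rpow {s : ℝ} (hs : -3 < s) (x : E3) (r : ℝ) :
    IntegrableOn (fun y : E3 => ‖x - y‖ ^ s) (ball x r) := by
  have h := (integrable_indicator_iff measurableSet_ball).2 (integrableOn_norm_rpow hs r)
  have h2 := h.comp_sub_left x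
  rw [← integrable_indicator_iff measurableSet_ball]
  refine h2.congr (.of_forall fun y => ?_)
  simp [Set.indicator, dist_eq_norm, norm_sub_rev]

lemma integral_ball_norm_sub_rpow {s r : ℝ} (hr : 0 < r) (x : E3) :
    ∫ y in ball x r, ‖x - y‖ ^ s = r ^ (s + 3) * ∫ v in ball (0 : E3) 1, ‖v‖ ^ s := by
  rw [← integral_ball_norm_rpow hr, ← integral_indicator measurableSet_ball,
    ← integral_indicator measurableSet_ball, ← integral_sub_left_eq_self _ volume x]
  congr 1 with y
  simp [Set.indicator, dist_eq_norm]

/-! ### Differentiating singular potentials -/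

section Potential

variable {F₁ F₂ F₃ : Type*} [NormedAddCommGroup F₁] [NormedSpace ℝ F₁]
  [NormedAddCommGroup F₂] [NormedSpace ℝ F₂] [NormedAddCommGroup F₃] [NormedSpace ℝ F₃]

/-- At the centre `x`, the order-`α` vanishing of the density `w` compensates the order-`p`
singularity of the kernel `k`. -/
lemma integrable_potential (L : F₁ →L[ℝ] F₂ →L[ℝ] F₃) {w : E3 → F₁} {k : E3 → F₂} {x : E3}
    {A M R α p : ℝ} (hM : 0 ≤ M) (hw : AEStronglyMeasurable w) (hk : AEStronglyMeasurable k)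
    (hwM : ∀ y, ‖w y‖ ≤ M * ‖x - y‖ ^ α) (hwR : ∀ y, R ≤ ‖x - y‖ → w y = 0)
    (hkA : ∀ v, ‖k v‖ ≤ A * ‖v‖ ^ (-p)) (hαp : p - α < 3) :
    Integrable (fun y => L (w y) (k (x - y))) := by
  have h := ((integrable_indicator_iff measurableSet_ball).2
    (integrableOn_ball_norm_sub_rpow (s := α - p) (by linarith) x R)).const_mul (‖L‖ * (M * A))
  refine h.mono' (L.aestronglyMeasurable_comp₂ hw
    (hk.comp_quasiMeasurePreserving (quasiMeasurePreserving_sub_left volume x))) ?_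
  have hne : ∀ᵐ y ∂(volume : Measure E3), y ≠ x := by simp [ae_iff]
  filter_upwards [hne] with y hy
  by_cases hyR : R ≤ ‖x - y‖
  · have : y ∉ ball x R := by simpa [dist_eq_norm, norm_sub_rev] using hyR
    simp [hwR y hyR, this]
  · have hmem : y ∈ ball x R := by simpa [dist_eq_norm, norm_sub_rev] using hyR
    have hpos : 0 < ‖x - y‖ := norm_pos_iff.2 (sub_ne_zero.2 hy.symm)
    rw [Set.indicator_of_mem hmem, sub_eq_add_neg α, Real.rpow_add hpos]
    calc ‖L (w y) (k (x - y))‖ ≤ ‖L‖ * ‖w y‖ * ‖k (x - y)‖ := L.le_opNorm₂ _ _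
      _ ≤ ‖L‖ * (M * ‖x - y‖ ^ α) * (A * ‖x - y‖ ^ (-p)) := by
        gcongr
        · exact hwM y
        · exact hkA _
      _ = _ := by ring

/-- At an arbitrary point `z` only the boundedness of the density is available, so the kernel itself
has to be integrable. -/
lemma integrable_potential' (L : F₁ →L[ℝ] F₂ →L[ℝ] F₃) {w : E3 → F₁} {k : E3 → F₂} {x : E3}
    (z : E3) {A M R α p : ℝ} (hM : 0 ≤ M) (hw : AEStronglyMeasurable w)
    (hk : AEStronglyMeasurable k)
    (hwM : ∀ y, ‖w y‖ ≤ M * ‖x - y‖ ^ α) (hwR : ∀ y, R ≤ ‖x - y‖ → w y = 0)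
    (hkA : ∀ v, ‖k v‖ ≤ A * ‖v‖ ^ (-p)) (hα : 0 ≤ α) (hp : p < 3) :
    Integrable (fun y => L (w y) (k (z - y))) := by
  refine integrable_potential L (M := M * max R 0 ^ α) (R := R + ‖z - x‖) (α := 0) (p := p)
    (by positivity) hw hk (fun y => ?_) (fun y hy => hwR y ?_) hkA (by linarith)
  · rw [Real.rpow_zero, mul_one]
    by_cases hyR : R ≤ ‖x - y‖
    · rw [hwR y hyR, norm_zero]; positivity
    · refine (hwM y).trans ?_
      gcongr
      exact (not_le.1 hyR).le.trans (le_max_left _ _)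
  · have := norm_add_le (z - x) (x - y)
    rw [sub_add_sub_cancel] at this
    linarith

/-- Mean value estimate away from the singularity: along the segment from `v` to `v + h` the
norm stays at least `‖v‖ / 2`. -/
lemma norm_kernel_sub_le {k : E3 → F₂} {k' : E3 → E3 →L[ℝ] F₂} {A p : ℝ} (hA : 0 ≤ A) (hp : 0 ≤ p)
    (hkd : ∀ v ≠ 0, HasFDerivAt k (k' v) v) (hk'A : ∀ v, ‖k' v‖ ≤ A * ‖v‖ ^ (-(p + 1)))
    {v h : E3} (hv : v ≠ 0) (hvh : 2 * ‖h‖ ≤ ‖v‖) :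
    ‖k (v + h) - k v‖ ≤ A * 2 ^ (p + 1) * ‖v‖ ^ (-(p + 1)) * ‖h‖ := by
  have hpos : 0 < ‖v‖ := norm_pos_iff.2 hv
  have hb : ∀ y ∈ closedBall v (‖v‖ / 2), ‖v‖ / 2 ≤ ‖y‖ := by
    intro y hy
    rw [mem_closedBall, dist_eq_norm] at hy
    have := norm_sub_norm_le v y
    rw [norm_sub_rev] at this
    linarith
  have := (convex_closedBall v (‖v‖ / 2)).norm_image_sub_le_of_norm_hasFDerivWithin_le
    (f := k) (f' := k') (C := A * 2 ^ (p + 1) * ‖v‖ ^ (-(p + 1))) (x := v) (y := v + h)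
    (fun y hy => (hkd y ?_).hasFDerivWithinAt) (fun y hy => ?_)
    (mem_closedBall_self (by positivity)) ?_
  · simpa using this
  · rw [← norm_pos_iff]; linarith [hb y hy]
  · refine (hk'A y).trans ?_
    rw [mul_assoc]
    gcongr
    calc ‖y‖ ^ (-(p + 1)) ≤ (‖v‖ / 2) ^ (-(p + 1)) :=
          Real.rpow_le_rpow_of_nonpos (by positivity) (hb y hy) (by linarith)
      _ = _ := by
          rw [Real.div_rpow hpos.le (by norm_num), Real.rpow_neg (by norm_num : (0:ℝ) ≤ 2)]
          field_simp
  · simp only [mem_closedBall, dist_eq_norm, add_sub_cancel_left]; linarith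

set_option maxHeartbeats 1000000 in
/-- Differentiation under the integral sign for a singular kernel. The density `w` vanishes to order
`α` at `x`, so the derivative kernel `k'`, of order `-(p + 1)`, is integrable against `w` as soon as
`p + 1 - α < 3`, even when `k'` itself is not locally integrable. Writing `δ = ‖z - x‖`, the first
order Taylor remainder of `k (· - y)` is split into the contribution of `k (z - y)` for `y` in the
ball of radius `2δ` about `x`, which has size `δ ^ (α + 3 - p) = o(δ)`, and a rest which, divided by
`δ`, is dominated by a multiple of `‖x - y‖ ^ (-(p + 1))`. -/
theorem hasFDerivAt_potential (L : F₁ →L[ℝ] F₂ →L[ℝ] F₃) {w : E3 → F₁} {k : E3 → F₂}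
    {k' : E3 → E3 →L[ℝ] F₂} {x : E3} {A M R α p : ℝ} (hA : 0 ≤ A) (hM : 0 ≤ M)
    (hw : AEStronglyMeasurable w) (hk : AEStronglyMeasurable k) (hk' : AEStronglyMeasurable k')
    (hwM : ∀ y, ‖w y‖ ≤ M * ‖x - y‖ ^ α) (hwR : ∀ y, R ≤ ‖x - y‖ → w y = 0)
    (hkd : ∀ v ≠ 0, HasFDerivAt k (k' v) v)
    (hkA : ∀ v, ‖k v‖ ≤ A * ‖v‖ ^ (-p)) (hk'A : ∀ v, ‖k' v‖ ≤ A * ‖v‖ ^ (-(p + 1)))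
    (hα : 0 ≤ α) (hp0 : 0 ≤ p) (hp : p < 3) (hαp : p + 1 - α < 3) :
    HasFDerivAt (fun z => ∫ y, L (w y) (k (z - y)))
      (∫ y, L.precompR E3 (w y) (k' (x - y))) x := by
  have hne : ∀ᵐ y ∂(volume : Measure E3), y ≠ x := by simp [ae_iff]
  have hI : ∀ z, Integrable (fun y => L (w y) (k (z - y))) := fun z =>
    integrable_potential' L z hM hw hk hwM hwR hkA hα hp
  have hI' : Integrable (fun y => L.precompR E3 (w y) (k' (x - y))) :=
    integrable_potential (L.precompR E3) hM hw hk' hwM hwR hk'A hαp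
  have hI'' : ∀ h : E3, Integrable (fun y => L (w y) (k' (x - y) h)) := fun h => by
    simpa using hI'.apply_continuousLinearMap h
  have hIn : ∀ z, Integrable (fun y => L (w y)
      ((ball x (2 * ‖z - x‖)).indicator (fun y => k (z - y)) y)) := fun z => by
    refine ((hI z).indicator (measurableSet_ball (x := x) (ε := 2 * ‖z - x‖))).congr
      (.of_forall fun y => ?_)
    by_cases hy : y ∈ ball x (2 * ‖z - x‖)
    · simp only [Set.indicator_of_mem hy]
    · simp only [Set.indicator_of_notMem hy, map_zero]
  -- The Taylor remainder of the kernel, with the moving singularity `k (z - y)` cut out near `x`.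
  obtain ⟨b, hb⟩ : ∃ b : E3 → E3 → F₂, b = fun z y => k (z - y) - k (x - y) - k' (x - y) (z - x)
    - (ball x (2 * ‖z - x‖)).indicator (fun y => k (z - y)) y := ⟨_, rfl⟩
  have hIb : ∀ z, Integrable (fun y => L (w y) (b z y)) := fun z => by
    simp only [hb, map_sub]
    simpa using! (((hI z).sub (hI x)).sub (hI'' (z - x))).sub (hIn z)
  have hdecomp : ∀ z, (∫ y, L (w y) (k (z - y))) - (∫ y, L (w y) (k (x - y)))
      - (∫ y, L.precompR E3 (w y) (k' (x - y))) (z - x)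
      = (∫ y, L (w y) (b z y)) + ∫ y, L (w y)
      ((ball x (2 * ‖z - x‖)).indicator (fun y => k (z - y)) y) := fun z => by
    rw [ContinuousLinearMap.integral_apply hI', ← integral_add (hIb z) (hIn z)]
    change _ - _ - ∫ y, L (w y) (k' (x - y) (z - x)) = _
    rw [← integral_sub (hI z) (hI x)]
    refine (integral_sub ((hI z).sub (hI x)) (hI'' (z - x))).symm.trans ?_
    congr 1 with y
    simp [hb]
  have hbound : ∀ z y, y ≠ x → ‖z - x‖⁻¹ * ‖b z y‖
      ≤ A * (2 ^ (p + 1) + 3) * ‖x - y‖ ^ (-(p + 1)) := by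
    intro z y hy
    have hv : x - y ≠ 0 := sub_ne_zero.2 hy.symm
    have hpos : 0 < ‖x - y‖ := norm_pos_iff.2 hv
    rcases eq_or_ne z x with rfl | hz
    · simp only [sub_self, norm_zero, inv_zero, zero_mul]; positivity
    have hδ : 0 < ‖z - x‖ := norm_pos_iff.2 (sub_ne_zero.2 hz)
    rw [inv_mul_le_iff₀ hδ]
    have h1 : ‖k' (x - y) (z - x)‖ ≤ A * ‖x - y‖ ^ (-(p + 1)) * ‖z - x‖ :=
      (k' (x - y)).le_of_opNorm_le (hk'A _) _
    have hT : 0 ≤ A * ‖x - y‖ ^ (-(p + 1)) * ‖z - x‖ := by positivity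
    by_cases hyn : y ∈ ball x (2 * ‖z - x‖)
    · have hyn' : ‖x - y‖ ≤ 2 * ‖z - x‖ := by
        rw [mem_ball, dist_eq_norm, norm_sub_rev] at hyn; exact hyn.le
      have h2 : ‖k (x - y)‖ ≤ 2 * (A * ‖x - y‖ ^ (-(p + 1)) * ‖z - x‖) := by
        refine (hkA _).trans ?_
        have : ‖x - y‖ ^ (-p) = ‖x - y‖ ^ (-(p + 1)) * ‖x - y‖ := by
          rw [show -p = -(p + 1) + 1 by ring, Real.rpow_add hpos, Real.rpow_one]
        rw [this]
        calc _ ≤ A * (‖x - y‖ ^ (-(p + 1)) * (2 * ‖z - x‖)) := by gcongr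
          _ = _ := by ring
      have h3 : b z y = -k (x - y) - k' (x - y) (z - x) := by
        simp only [hb, Set.indicator_of_mem hyn]; abel
      rw [h3]
      refine (norm_sub_le _ _).trans ?_
      rw [norm_neg]
      have : 0 ≤ (2:ℝ) ^ (p + 1) := by positivity
      nlinarith [mul_nonneg this hT]
    · have hyn' : 2 * ‖z - x‖ ≤ ‖x - y‖ := by
        rw [mem_ball, dist_eq_norm, norm_sub_rev] at hyn; exact not_lt.1 hyn
      have h2 := norm_kernel_sub_le hA hp0 hkd hk'A hv hyn'
      rw [show x - y + (z - x) = z - y by abel] at h2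
      have h3 : b z y = (k (z - y) - k (x - y)) - k' (x - y) (z - x) := by
        simp only [hb, Set.indicator_of_notMem hyn]; abel
      rw [h3]
      refine (norm_sub_le _ _).trans ?_
      nlinarith
  have hlim : ∀ y, y ≠ x → Tendsto (fun z => ‖z - x‖⁻¹ * ‖b z y‖) (𝓝 x) (𝓝 0) := by
    intro y hy
    have hv : x - y ≠ 0 := sub_ne_zero.2 hy.symm
    have hd : HasFDerivAt (fun z => k (z - y)) (k' (x - y)) x :=
      (hasFDerivAt_comp_sub y).2 (hkd _ hv)
    refine (hasFDerivAt_iff_tendsto.1 hd).congr' ?_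
    have hc : Tendsto (fun z : E3 => 2 * ‖z - x‖) (𝓝 x) (𝓝 0) := by
      have : Continuous (fun z : E3 => 2 * ‖z - x‖) := by fun_prop
      simpa using this.tendsto x
    filter_upwards [hc.eventually (gt_mem_nhds (norm_pos_iff.2 hv))] with z hz
    have : y ∉ ball x (2 * ‖z - x‖) := by
      rw [mem_ball, dist_eq_norm, norm_sub_rev]; exact not_lt.2 hz.le
    simp [hb, Set.indicator_of_notMem this]
  -- Dominated convergence handles everything except the moving singularity.
  have hfar : Tendsto (fun z => ∫ y, ‖z - x‖⁻¹ • L (w y) (b z y)) (𝓝 x) (𝓝 0) := by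
    have hg := ((integrable_indicator_iff measurableSet_ball).2
      (integrableOn_ball_norm_sub_rpow (s := α - (p + 1)) (by linarith) x R)).const_mul
        (‖L‖ * (M * (A * (2 ^ (p + 1) + 3))))
    rw [← integral_zero E3 F₃]
    refine tendsto_integral_filter_of_dominated_convergence _
      (.of_forall fun z => ((hIb z).smul _).aestronglyMeasurable) (.of_forall fun z => ?_) hg ?_
    · filter_upwards [hne] with y hy
      by_cases hyR : R ≤ ‖x - y‖
      · have : y ∉ ball x R := by simpa [dist_eq_norm, norm_sub_rev] using hyR
        simp [hwR y hyR, this]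
      · have hmem : y ∈ ball x R := by simpa [dist_eq_norm, norm_sub_rev] using hyR
        have hpos : 0 < ‖x - y‖ := norm_pos_iff.2 (sub_ne_zero.2 hy.symm)
        rw [Set.indicator_of_mem hmem, sub_eq_add_neg α, Real.rpow_add hpos, norm_smul, norm_inv,
          norm_norm]
        calc ‖z - x‖⁻¹ * ‖L (w y) (b z y)‖ ≤ ‖z - x‖⁻¹ * (‖L‖ * ‖w y‖ * ‖b z y‖) := by
              gcongr; exact L.le_opNorm₂ _ _
          _ = ‖L‖ * ‖w y‖ * (‖z - x‖⁻¹ * ‖b z y‖) := by ring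
          _ ≤ ‖L‖ * (M * ‖x - y‖ ^ α) * (A * (2 ^ (p + 1) + 3) * ‖x - y‖ ^ (-(p + 1))) := by
            refine mul_le_mul (mul_le_mul_of_nonneg_left (hwM y) (by positivity))
              (hbound z y hy) (by positivity) (by positivity)
          _ = _ := by ring
    · filter_upwards [hne] with y hy
      have := (hlim y hy).const_mul (‖L‖ * ‖w y‖)
      rw [mul_zero] at this
      refine squeeze_zero_norm (fun z => ?_) this
      rw [norm_smul, norm_inv, norm_norm]
      calc ‖z - x‖⁻¹ * ‖L (w y) (b z y)‖ ≤ ‖z - x‖⁻¹ * (‖L‖ * ‖w y‖ * ‖b z y‖) := by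
              gcongr; exact L.le_opNorm₂ _ _
          _ = ‖L‖ * ‖w y‖ * (‖z - x‖⁻¹ * ‖b z y‖) := by ring
  -- The moving singularity is estimated by enlarging the ball about `x` to a ball about `z`.
  obtain ⟨c, hc⟩ : ∃ c : ℝ, c = ∫ v in ball (0 : E3) 1, ‖v‖ ^ (-p) := ⟨_, rfl⟩
  have hc0 : 0 ≤ c := hc ▸ integral_nonneg fun v => by positivity
  have hnear : ∀ z, z ≠ x → ‖∫ y, L (w y)
      ((ball x (2 * ‖z - x‖)).indicator (fun y => k (z - y)) y)‖
      ≤ ‖L‖ * (M * (2 * ‖z - x‖) ^ α) * A * ((3 * ‖z - x‖) ^ (-p + 3) * c) := by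
    intro z hz
    have hδ : 0 < ‖z - x‖ := norm_pos_iff.2 (sub_ne_zero.2 hz)
    rw [hc, ← integral_ball_norm_sub_rpow (by positivity) z,
      ← integral_indicator measurableSet_ball, ← integral_const_mul]
    refine norm_integral_le_of_norm_le (((integrable_indicator_iff measurableSet_ball).2
      (integrableOn_ball_norm_sub_rpow (by linarith) z _)).const_mul _) (.of_forall fun y => ?_)
    by_cases hyn : y ∈ ball x (2 * ‖z - x‖)
    · have hyn' : ‖x - y‖ ≤ 2 * ‖z - x‖ := by
        rw [mem_ball, dist_eq_norm, norm_sub_rev] at hyn; exact hyn.le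
      have hy3 : y ∈ ball z (3 * ‖z - x‖) := by
        rw [mem_ball] at hyn ⊢
        have := dist_triangle y x z
        rw [dist_comm x z, dist_eq_norm z x] at this
        linarith
      rw [Set.indicator_of_mem hyn, Set.indicator_of_mem hy3]
      calc ‖L (w y) (k (z - y))‖ ≤ ‖L‖ * ‖w y‖ * ‖k (z - y)‖ := L.le_opNorm₂ _ _
        _ ≤ ‖L‖ * (M * (2 * ‖z - x‖) ^ α) * (A * ‖z - y‖ ^ (-p)) := by
          gcongr
          · exact (hwM y).trans (by gcongr)
          · exact hkA _
        _ = _ := by ring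
    · rw [Set.indicator_of_notMem hyn, map_zero, norm_zero]
      refine mul_nonneg (by positivity) (Set.indicator_nonneg (fun v _ => by positivity) _)
  rw [hasFDerivAt_iff_tendsto]
  have hδlim : Tendsto (fun z : E3 => ‖z - x‖ ^ (α + 2 - p)) (𝓝 x) (𝓝 0) := by
    have : Continuous (fun z : E3 => ‖z - x‖ ^ (α + 2 - p)) :=
      (by fun_prop : Continuous (fun z : E3 => ‖z - x‖)).rpow_const
        fun _ => Or.inr (by linarith)
    have h := this.tendsto x
    rwa [sub_self, norm_zero, Real.zero_rpow (by linarith)] at h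
  have htot := hfar.norm.add (hδlim.const_mul (‖L‖ * (M * 2 ^ α) * A * (3 ^ (-p + 3) * c)))
  rw [norm_zero, mul_zero, zero_add] at htot
  refine squeeze_zero (fun z => by positivity) (fun z => ?_) htot
  rw [hdecomp]
  rcases eq_or_ne z x with rfl | hz
  · simp only [sub_self, norm_zero, inv_zero, zero_mul]; positivity
  have hδ : 0 < ‖z - x‖ := norm_pos_iff.2 (sub_ne_zero.2 hz)
  rw [integral_smul, norm_smul, norm_inv, norm_norm]
  refine (mul_le_mul_of_nonneg_left (norm_add_le _ _) (by positivity)).trans ?_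
  rw [mul_add]
  refine add_le_add le_rfl ?_
  refine (mul_le_mul_of_nonneg_left (hnear z hz) (by positivity)).trans (le_of_eq ?_)
  rw [Real.mul_rpow (by norm_num) hδ.le, Real.mul_rpow (by norm_num) hδ.le,
    show α + 2 - p = -1 + α + (-p + 3) by ring, Real.rpow_add hδ (-1 + α),
    Real.rpow_add hδ (-1), Real.rpow_neg_one]
  ring

/-- The derivative kernel may be evaluated under the integral sign. -/
lemma integral_precompR_apply (L : F₁ →L[ℝ] F₂ →L[ℝ] F₃) {w : E3 → F₁} {k : E3 → E3 →L[ℝ] F₂}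
    {x : E3} {A M R α p : ℝ} (hM : 0 ≤ M) (hw : AEStronglyMeasurable w)
    (hk : AEStronglyMeasurable k)
    (hwM : ∀ y, ‖w y‖ ≤ M * ‖x - y‖ ^ α) (hwR : ∀ y, R ≤ ‖x - y‖ → w y = 0)
    (hkA : ∀ v, ‖k v‖ ≤ A * ‖v‖ ^ (-p)) (hαp : p - α < 3) (h : E3) :
    Integrable (fun y => L (w y) (k (x - y) h)) ∧
      (∫ y, L.precompR E3 (w y) (k (x - y))) h = ∫ y, L (w y) (k (x - y) h) := by
  have hI := integrable_potential (L.precompR E3) hM hw hk hwM hwR hkA hαp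
  exact ⟨hI.apply_continuousLinearMap h, ContinuousLinearMap.integral_apply hI h⟩

end Potential

/-! ### The Newtonian kernel and its derivatives -/

section Norm

variable {E : Type*} [NormedAddCommGroup E]

/-- `‖v‖⁻¹`, equal in dimension three to `4π` times the fundamental solution of `-Δ`. -/
noncomputable def newtK (v : E) : ℝ := ‖v‖⁻¹

lemma norm_newtK_le (v : E) : ‖newtK v‖ ≤ 4 * ‖v‖ ^ (-1 : ℝ) := by
  rw [Real.rpow_neg_one, newtK, norm_inv, norm_norm]
  have : 0 ≤ ‖v‖⁻¹ := by positivity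
  linarith

lemma stronglyMeasurable_newtK [MeasurableSpace E] [BorelSpace E] :
    StronglyMeasurable (newtK : E → ℝ) := by
  unfold newtK
  exact (by fun_prop : Measurable fun v : E => ‖v‖⁻¹).stronglyMeasurable

lemma continuousAdd_bilinear [NormedSpace ℝ E] {F : Type*} [NormedAddCommGroup F]
    [NormedSpace ℝ F] : ContinuousAdd (E →L[ℝ] E →L[ℝ] F) := by
  have : IsTopologicalAddGroup (E →L[ℝ] E →L[ℝ] F) := ContinuousLinearMap.topologicalAddGroup
  exact IsTopologicalAddGroup.toContinuousAdd

lemma pseudoMetrizable_bilinear [NormedSpace ℝ E] {F : Type*} [NormedAddCommGroup F]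
    [NormedSpace ℝ F] : TopologicalSpace.PseudoMetrizableSpace (E →L[ℝ] E →L[ℝ] F) := by
  let _ : SeminormedAddCommGroup (E →L[ℝ] E →L[ℝ] F) :=
    ContinuousLinearMap.toSeminormedAddCommGroup
  exact PseudoEMetricSpace.pseudoMetrizableSpace

end Norm

section Kernel

variable {E : Type*} [NormedAddCommGroup E] [InnerProductSpace ℝ E]

/-- The inner product as a bilinear continuous map, in the plain `→L` form that the iterated
derivatives use instead of the star-semilinear form of `innerSL`. -/
noncomputable def innerB : E →L[ℝ] E →L[ℝ] ℝ := innerSL ℝ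

@[simp] lemma innerB_apply (v h : E) : innerB v h = inner ℝ v h := rfl

lemma norm_innerB_apply (v : E) : ‖innerB v‖ = ‖v‖ := innerSL_apply_norm ℝ v

/-- The derivative of `newtK` away from the origin. -/
noncomputable def newtG (v : E) : E →L[ℝ] ℝ := (-(‖v‖ ^ 3)⁻¹) • innerB v

/-- The second derivative of `newtK` away from the origin. -/
noncomputable def newtH (v : E) : E →L[ℝ] E →L[ℝ] ℝ :=
  (-(‖v‖ ^ 3)⁻¹) • innerB + (3 * (‖v‖ ^ 5)⁻¹) • (innerB v).smulRight (innerB v)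

lemma hasFDerivAt_norm' {v : E} (hv : v ≠ 0) :
    HasFDerivAt (fun v : E => ‖v‖) (‖v‖⁻¹ • innerB v) v := by
  have h := (hasStrictFDerivAt_norm_sq v).hasFDerivAt.sqrt (by positivity)
  simp only [Real.sqrt_sq (norm_nonneg _)] at h
  refine h.congr_fderiv ?_
  ext y
  have : ‖v‖ ≠ 0 := norm_ne_zero_iff.2 hv
  simp
  field_simp

lemma hasFDerivAt_newtK {v : E} (hv : v ≠ 0) :
    HasFDerivAt newtK (newtG v) v := by
  have hn : ‖v‖ ≠ 0 := norm_ne_zero_iff.2 hv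
  refine ((hasDerivAt_inv hn).comp_hasFDerivAt v (hasFDerivAt_norm' hv)).congr_fderiv ?_
  ext y
  simp [newtG]
  field_simp

lemma hasFDerivAt_newtG {v : E} (hv : v ≠ 0) : HasFDerivAt newtG (newtH v) v := by
  have hn : ‖v‖ ≠ 0 := norm_ne_zero_iff.2 hv
  have h1 := (((hasDerivAt_pow 3 ‖v‖).inv (pow_ne_zero 3 hn)).neg.comp_hasFDerivAt v
    (hasFDerivAt_norm' hv)).smul innerB.hasFDerivAt
  refine h1.congr_fderiv ?_
  ext y z
  simp [newtH]
  field_simp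

lemma norm_newtG_le (v : E) : ‖newtG v‖ ≤ 4 * ‖v‖ ^ (-(1 + 1) : ℝ) := by
  rw [Real.rpow_neg (norm_nonneg _), newtG, norm_smul, norm_innerB_apply, norm_neg,
    norm_inv, norm_pow, norm_norm, show (1 + 1 : ℝ) = (2 : ℕ) by norm_num, Real.rpow_natCast]
  rcases eq_or_ne v 0 with rfl | hv
  · simp
  have hn : 0 < ‖v‖ := norm_pos_iff.2 hv
  field_simp
  norm_num

lemma norm_newtH_le (v : E) : ‖newtH v‖ ≤ 4 * ‖v‖ ^ (-(2 + 1) : ℝ) := by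
  have hB : ‖(innerB : E →L[ℝ] E →L[ℝ] ℝ)‖ ≤ 1 :=
    ContinuousLinearMap.opNorm_le_bound _ zero_le_one fun v => by
      rw [norm_innerB_apply, one_mul]
  rw [Real.rpow_neg (norm_nonneg _), show (2 + 1 : ℝ) = (3 : ℕ) by norm_num, Real.rpow_natCast]
  unfold newtH
  refine (ContinuousLinearMap.opNorm_add_le _ _).trans ?_
  rw [norm_smul, norm_smul, norm_neg, norm_inv, norm_pow, norm_norm, norm_mul, norm_inv, norm_pow,
    norm_norm, ContinuousLinearMap.norm_smulRight_apply, norm_innerB_apply]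
  rcases eq_or_ne v 0 with rfl | hv
  · simp
  have hn : 0 < ‖v‖ := norm_pos_iff.2 hv
  have h3 : ‖(3 : ℝ)‖ * (‖v‖ ^ 5)⁻¹ * (‖v‖ * ‖v‖) = 3 * (‖v‖ ^ 3)⁻¹ := by
    rw [Real.norm_of_nonneg (by norm_num)]; field_simp
  have h4 : (‖v‖ ^ 3)⁻¹ * ‖(innerB : E →L[ℝ] E →L[ℝ] ℝ)‖ ≤ (‖v‖ ^ 3)⁻¹ * 1 := by gcongr
  linarith

variable [MeasurableSpace E] [BorelSpace E] [SecondCountableTopology E]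

lemma stronglyMeasurable_newtG : StronglyMeasurable (newtG : E → E →L[ℝ] ℝ) := by
  unfold newtG
  exact (by fun_prop : Measurable fun v : E => -(‖v‖ ^ 3)⁻¹).stronglyMeasurable.smul
    innerB.continuous.stronglyMeasurable

lemma stronglyMeasurable_newtH : StronglyMeasurable (newtH : E → E →L[ℝ] E →L[ℝ] ℝ) := by
  unfold newtH
  have h : Continuous fun v : E => (innerB v).smulRight (innerB v) :=
    (ContinuousLinearMap.smulRightL ℝ E (E →L[ℝ] ℝ)).continuous₂.comp
      (innerB.continuous.prodMk innerB.continuous)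
  have hA : ContinuousAdd (E →L[ℝ] E →L[ℝ] ℝ) := continuousAdd_bilinear
  have hP : TopologicalSpace.PseudoMetrizableSpace (E →L[ℝ] E →L[ℝ] ℝ) :=
    pseudoMetrizable_bilinear
  have h1 := (by fun_prop : Measurable fun v : E => -(‖v‖ ^ 3)⁻¹).stronglyMeasurable
  have h2 := (by fun_prop : Measurable fun v : E => 3 * (‖v‖ ^ 5)⁻¹).stronglyMeasurable
  exact (h1.smul_const (innerB : E →L[ℝ] E →L[ℝ] ℝ)).add (h2.smul h.stronglyMeasurable)

end Kernel

/-! ### Second moments of radial functions -/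

lemma integral_comp_isometry (T : E3 ≃ₗᵢ[ℝ] E3) (f : E3 → ℝ) : ∫ v, f (T v) = ∫ v, f v :=
  T.measurePreserving.integral_comp T.toHomeomorph.measurableEmbedding f

lemma integrable_radial_mul {g : ℝ → ℝ} (hg : Integrable fun v : E3 => g ‖v‖ * ‖v‖ ^ 2)
    (i j : Fin 3) : Integrable fun v : E3 => g ‖v‖ * (v i * v j) := by
  have hb : ∀ (v : E3) (i : Fin 3), |v i| ≤ ‖v‖ := fun v i => PiLp.norm_apply_le v i
  have := hg.mul_bdd (c := 1) (g := fun v : E3 => v i * v j * (‖v‖ ^ 2)⁻¹)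
    (by fun_prop : Measurable fun v : E3 => v i * v j * (‖v‖ ^ 2)⁻¹).aestronglyMeasurable
    (.of_forall fun v => by
      rw [norm_mul, norm_inv, norm_mul, norm_pow, norm_norm, Real.norm_eq_abs, Real.norm_eq_abs]
      refine mul_inv_le_one_of_le₀ ?_ (by positivity)
      rw [sq]
      gcongr <;> exact hb v _)
  refine this.congr (.of_forall fun v => ?_)
  rcases eq_or_ne v 0 with rfl | hv
  · simp
  · have : ‖v‖ ≠ 0 := norm_ne_zero_iff.2 hv
    simp only
    field_simp

/-- Isotropy of radial second moments: coordinate reflections kill the off-diagonal moments, and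
coordinate swaps make the diagonal ones equal. -/
lemma integral_radial_mul {g : ℝ → ℝ} (hg : Integrable fun v : E3 => g ‖v‖ * ‖v‖ ^ 2)
    (i j : Fin 3) :
    ∫ v : E3, g ‖v‖ * (v i * v j) = (if i = j then 1 / 3 else 0) * ∫ v : E3, g ‖v‖ * ‖v‖ ^ 2 := by
  split_ifs with hij
  · subst hij
    have hsw : ∀ k, ∫ v : E3, g ‖v‖ * (v k * v k) = ∫ v : E3, g ‖v‖ * (v i * v i) := fun k => by
      rw [← integral_comp_isometry (LinearIsometryEquiv.piLpCongrLeft 2 ℝ ℝ (Equiv.swap i k))]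
      congr 1 with v
      rw [LinearIsometryEquiv.norm_map]
      simp [LinearIsometryEquiv.piLpCongrLeft_apply, Equiv.piCongrLeft'_apply]
    have hsum : ∫ v : E3, g ‖v‖ * ‖v‖ ^ 2 = ∑ k : Fin 3, ∫ v : E3, g ‖v‖ * (v k * v k) := by
      rw [← integral_finsetSum _ fun k _ => integrable_radial_mul hg k k]
      congr 1 with v
      rw [← Finset.mul_sum, EuclideanSpace.norm_sq_eq]
      simp [sq]
    rw [hsum, Finset.sum_congr rfl fun k _ => hsw k]
    simp
  · have := integral_comp_isometry (LinearIsometryEquiv.piLpCongrRight 2 (fun k : Fin 3 =>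
      if k = i then LinearIsometryEquiv.neg ℝ else LinearIsometryEquiv.refl ℝ ℝ))
      (fun v => g ‖v‖ * (v i * v j))
    simp only [LinearIsometryEquiv.norm_map] at this
    simp [LinearIsometryEquiv.piLpCongrRight_apply, Ne.symm hij, integral_neg] at this
    linarith

/-! ### A radial cutoff -/

/-- A smooth radial cutoff: equal to `1` on the ball of radius `ρ` and to `0` outside the ball of
radius `2ρ`. -/
noncomputable def bump (ρ : ℝ) (v : E3) : ℝ := Real.smoothTransition (2 - ‖v‖ ^ 2 / ρ ^ 2)

/-- The radial factor in `∇ bump ρ v = bumpSlope ρ ‖v‖ • v`. -/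
noncomputable def bumpSlope (ρ r : ℝ) : ℝ :=
  deriv Real.smoothTransition (2 - r ^ 2 / ρ ^ 2) * (-2 / ρ ^ 2)

section Bump

variable {ρ : ℝ}

lemma contDiff_bump {n : ℕ∞} : ContDiff ℝ n (bump ρ) :=
  Real.smoothTransition.contDiff.comp (contDiff_const.sub ((contDiff_norm_sq ℝ).div_const _))

lemma two_sub_le (hρ : 0 < ρ) {r : ℝ} (hr : 2 * ρ ≤ r) : 2 - r ^ 2 / ρ ^ 2 < 0 := by
  have : 2 < r ^ 2 / ρ ^ 2 := by
    rw [lt_div_iff₀ (by positivity)]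
    nlinarith
  linarith

lemma bump_eq_zero (hρ : 0 < ρ) {v : E3} (hv : 2 * ρ ≤ ‖v‖) : bump ρ v = 0 :=
  Real.smoothTransition.zero_of_nonpos (two_sub_le hρ hv).le

lemma bump_eq_one (hρ : 0 < ρ) {v : E3} (hv : ‖v‖ ≤ ρ) : bump ρ v = 1 := by
  refine Real.smoothTransition.one_of_one_le ?_
  have : ‖v‖ ^ 2 / ρ ^ 2 ≤ 1 := by
    rw [div_le_one (by positivity)]
    gcongr
  linarith

lemma abs_bump_le (v : E3) : |bump ρ v| ≤ 1 := by
  rw [bump, abs_of_nonneg (Real.smoothTransition.nonneg _)]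
  exact Real.smoothTransition.le_one _

lemma hasCompactSupport_bump (hρ : 0 < ρ) : HasCompactSupport (bump ρ) :=
  HasCompactSupport.intro (isCompact_closedBall 0 (2 * ρ)) fun v hv =>
    bump_eq_zero hρ (by simpa using (not_le.1 (by simpa using hv)).le)

lemma bumpSlope_eq_zero (hρ : 0 < ρ) {r : ℝ} (hr : 2 * ρ ≤ r) : bumpSlope ρ r = 0 := by
  have h : Real.smoothTransition =ᶠ[𝓝 (2 - r ^ 2 / ρ ^ 2)] fun _ => 0 := by
    filter_upwards [gt_mem_nhds (two_sub_le hρ hr)] with s hs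
    exact Real.smoothTransition.zero_of_nonpos hs.le
  rw [bumpSlope, h.deriv_eq, deriv_const, zero_mul]

lemma continuous_bumpSlope : Continuous (bumpSlope ρ) := by
  have h : Continuous (deriv Real.smoothTransition) :=
    (Real.smoothTransition.contDiff (n := 1)).continuous_deriv le_rfl
  unfold bumpSlope
  exact (h.comp (by fun_prop)).mul continuous_const

lemma fderiv_bump (v : E3) : fderiv ℝ (bump ρ) v = bumpSlope ρ ‖v‖ • innerB v := by
  have h1 : HasDerivAt Real.smoothTransition _ (2 - ‖v‖ ^ 2 / ρ ^ 2) :=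
    ((Real.smoothTransition.contDiff (n := 1)).differentiable one_ne_zero _).hasDerivAt
  have h2 := ((hasStrictFDerivAt_norm_sq v).hasFDerivAt.mul_const (ρ ^ 2)⁻¹).const_sub 2
  simp only [← div_eq_mul_inv] at h2
  have h3 : HasFDerivAt (bump ρ) _ v := h1.comp_hasFDerivAt v h2
  rw [h3.fderiv]
  ext y
  simp [bumpSlope]
  ring

lemma hasDerivAt_bump_radial (r : ℝ) :
    HasDerivAt (fun r : ℝ => Real.smoothTransition (2 - r ^ 2 / ρ ^ 2)) (r * bumpSlope ρ r) r := by
  have h1 : HasDerivAt Real.smoothTransition _ (2 - r ^ 2 / ρ ^ 2) :=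
    ((Real.smoothTransition.contDiff (n := 1)).differentiable one_ne_zero _).hasDerivAt
  have h2 := ((hasDerivAt_pow 2 r).div_const (ρ ^ 2)).const_sub 2
  refine (h1.comp r h2).congr_deriv ?_
  simp [bumpSlope]
  ring

lemma integrableOn_bump_radial (hρ : 0 < ρ) :
    IntegrableOn (fun r : ℝ => r * bumpSlope ρ r) (Set.Ioi 0) := by
  have h : IntegrableOn (fun r : ℝ => r * bumpSlope ρ r) (Set.Ioc 0 (2 * ρ)) :=
    (continuous_id.mul continuous_bumpSlope).integrableOn_Ioc
  refine IntegrableOn.of_forall_sdiff_eq_zero h measurableSet_Ioi fun r hr => ?_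
  have : 2 * ρ ≤ r := by
    by_contra hlt
    exact hr.2 ⟨hr.1, (not_le.1 hlt).le⟩
  rw [bumpSlope_eq_zero hρ this, mul_zero]

lemma integral_bump_radial (hρ : 0 < ρ) :
    ∫ r in Set.Ioi (0 : ℝ), r * bumpSlope ρ r = -1 := by
  rw [integral_Ioi_of_hasDerivAt_of_tendsto' (m := 0) (fun r _ => hasDerivAt_bump_radial r)
    (integrableOn_bump_radial hρ)]
  · rw [Real.smoothTransition.one_of_one_le (by norm_num)]; norm_num
  · refine tendsto_const_nhds.congr' ?_
    filter_upwards [eventually_ge_atTop (2 * ρ)] with r hr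
    exact (Real.smoothTransition.zero_of_nonpos (two_sub_le hρ hr).le).symm

lemma bump_radial_smul_eq {r : ℝ} (hr : r ∈ Set.Ioi (0 : ℝ)) :
    r ^ (Module.finrank ℝ E3 - 1) • ((r ^ 3)⁻¹ * bumpSlope ρ r * r ^ 2) = r * bumpSlope ρ r := by
  have : r ≠ 0 := (Set.mem_Ioi.1 hr).ne'
  simp only [finrank_euclideanSpace, Fintype.card_fin, smul_eq_mul]
  norm_num
  field_simp

lemma integrable_bumpSlope (hρ : 0 < ρ) :
    Integrable fun v : E3 => (‖v‖ ^ 3)⁻¹ * bumpSlope ρ ‖v‖ * ‖v‖ ^ 2 := by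
  rw [integrable_fun_norm_addHaar volume (f := fun r : ℝ => (r ^ 3)⁻¹ * bumpSlope ρ r * r ^ 2)]
  exact (integrableOn_bump_radial hρ).congr_fun (fun r hr => (bump_radial_smul_eq hr).symm)
    measurableSet_Ioi

/-- In polar coordinates this is the total change `-1` of the cutoff along a ray, times the area
`4π` of the unit sphere. -/
lemma integral_bumpSlope (hρ : 0 < ρ) :
    ∫ v : E3, (‖v‖ ^ 3)⁻¹ * bumpSlope ρ ‖v‖ * ‖v‖ ^ 2 = -(4 * Real.pi) := by
  rw [integral_fun_norm_addHaar volume (fun r : ℝ => (r ^ 3)⁻¹ * bumpSlope ρ r * r ^ 2),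
    setIntegral_congr_fun measurableSet_Ioi fun r hr => bump_radial_smul_eq hr,
    integral_bump_radial hρ, Measure.real, EuclideanSpace.volume_ball_fin_three]
  simp [ENNReal.toReal_ofReal (by positivity : 0 ≤ Real.pi * 4 / 3)]
  ring

end Bump

/-! ### The potential of the cutoff -/

/-- The first derivative of the potential of the cutoff, with the derivative falling on the cutoff:
this leaves the kernel free for the second differentiation. -/
lemma hasFDerivAt_bumpPotential {ρ : ℝ} (hρ : 0 < ρ) (z : E3) :
    HasFDerivAt (fun z => ∫ y, bump ρ y * newtK (z - y))
      (∫ y, (ContinuousLinearMap.lsmul ℝ ℝ).flip (fderiv ℝ (bump ρ) y) (newtK (z - y))) z := by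
  have hK : LocallyIntegrable (newtK : E3 → ℝ) :=
    locallyIntegrable_of_norm_le_rpow (α := 1) (C := 4) (by simp) (by simp)
      (.of_forall norm_newtK_le) stronglyMeasurable_newtK.aestronglyMeasurable
  have h := (hasCompactSupport_bump hρ).hasFDerivAt_convolution_right
    (ContinuousLinearMap.lsmul ℝ ℝ) hK (contDiff_bump (n := 1)) z
  convert! h using 1
  · ext z
    rw [convolution_def, ← integral_sub_left_eq_self _ volume z]
    simp [mul_comm]
  · rw [convolution_def, ← integral_sub_left_eq_self _ volume z]
    congr 1 with t
    simp

/-- The Newtonian potential of a radial cutoff has an isotropic Hessian at the centre, because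
the gradients of the cutoff and of the kernel are both radial. -/
lemma exists_bumpPotential_hessian {ρ : ℝ} (hρ : 0 < ρ) :
    ∃ (P' : E3 → E3 →L[ℝ] ℝ) (P'' : E3 →L[ℝ] E3 →L[ℝ] ℝ),
      (∀ z, HasFDerivAt (fun z => ∫ y, bump ρ y * newtK (z - y)) (P' z) z) ∧
      HasFDerivAt P' P'' 0 ∧
      ∀ i j : Fin 3, P'' (EuclideanSpace.single i 1) (EuclideanSpace.single j 1)
        = -(4 * Real.pi) * if i = j then 1 / 3 else 0 := by
  obtain ⟨L, hL⟩ : ∃ L : (E3 →L[ℝ] ℝ) →L[ℝ] ℝ →L[ℝ] (E3 →L[ℝ] ℝ),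
      L = (ContinuousLinearMap.lsmul ℝ ℝ).flip := ⟨_, rfl⟩
  have hcd : Continuous (fderiv ℝ (bump ρ)) :=
    (contDiff_bump (n := 1)).continuous_fderiv one_ne_zero
  obtain ⟨M, hM⟩ := hcd.bounded_above_of_compact_support ((hasCompactSupport_bump hρ).fderiv ℝ)
  have hM0 : 0 ≤ M := (norm_nonneg _).trans (hM 0)
  have hwM : ∀ y : E3, ‖fderiv ℝ (bump ρ) y‖ ≤ M * ‖(0 : E3) - y‖ ^ (0 : ℝ) := by simpa using hM
  have hwR : ∀ y : E3, 2 * ρ ≤ ‖(0 : E3) - y‖ → fderiv ℝ (bump ρ) y = 0 := fun y hy => by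
    rw [fderiv_bump, bumpSlope_eq_zero hρ (by simpa using hy), zero_smul]
  have hwm : AEStronglyMeasurable (fderiv ℝ (bump ρ)) := hcd.aestronglyMeasurable
  have hK := (stronglyMeasurable_newtK (E := E3)).aestronglyMeasurable (μ := volume)
  have hG := (stronglyMeasurable_newtG (E := E3)).aestronglyMeasurable (μ := volume)
  refine ⟨_, ∫ y, L.precompR E3 (fderiv ℝ (bump ρ) y) (newtG (0 - y)),
    hasFDerivAt_bumpPotential hρ, ?_, ?_⟩
  · rw [← hL]
    exact hasFDerivAt_potential L (by norm_num : (0 : ℝ) ≤ 4) hM0 hwm hK hG hwM hwR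
      (fun v hv => hasFDerivAt_newtK hv) norm_newtK_le norm_newtG_le le_rfl zero_le_one
      (by norm_num) (by norm_num)
  · intro i j
    obtain ⟨hI, hP⟩ := integral_precompR_apply L hM0 hwm hG hwM hwR norm_newtG_le (by norm_num)
      (EuclideanSpace.single i 1)
    rw [hP, ContinuousLinearMap.integral_apply hI]
    have := integral_radial_mul (g := fun r => (r ^ 3)⁻¹ * bumpSlope ρ r)
      (integrable_bumpSlope hρ) i j
    rw [integral_bumpSlope hρ] at this
    rw [mul_comm, ← this]
    congr 1 with y
    simp [hL, newtG, fderiv_bump, EuclideanSpace.inner_single_right]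
    ring

/-! ### The potential of a density vanishing at the centre -/

/-- The potential of a bounded density of bounded support that vanishes to Hölder order at `x` has
a Hessian at `x`, obtained by differentiating twice under the integral sign. -/
lemma exists_potential_hessian {w : E3 → ℝ} {x : E3} {M M' R α : ℝ} (hα : 0 < α) (hM : 0 ≤ M)
    (hM' : 0 ≤ M') (hw : AEStronglyMeasurable w) (hwM : ∀ y, ‖w y‖ ≤ M * ‖x - y‖ ^ α)
    (hwM' : ∀ y, ‖w y‖ ≤ M') (hwR : ∀ y, R ≤ ‖x - y‖ → w y = 0) :
    ∃ (P' : E3 → E3 →L[ℝ] ℝ) (P'' : E3 →L[ℝ] E3 →L[ℝ] ℝ),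
      (∀ z, HasFDerivAt (fun z => ∫ y, w y * newtK (z - y)) (P' z) z) ∧
      HasFDerivAt P' P'' x ∧
      ∀ h h', Integrable (fun y => w y * newtH (x - y) h h') ∧
        P'' h h' = ∫ y, w y * newtH (x - y) h h' := by
  obtain ⟨L, hL⟩ : ∃ L : ℝ →L[ℝ] (E3 →L[ℝ] ℝ) →L[ℝ] (E3 →L[ℝ] ℝ),
      L = ContinuousLinearMap.lsmul ℝ ℝ := ⟨_, rfl⟩
  have hK := (stronglyMeasurable_newtK (E := E3)).aestronglyMeasurable (μ := volume)
  have hG := (stronglyMeasurable_newtG (E := E3)).aestronglyMeasurable (μ := volume)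
  have hH := (stronglyMeasurable_newtH (E := E3)).aestronglyMeasurable (μ := volume)
  refine ⟨fun z => ∫ y, L (w y) (newtG (z - y)), ∫ y, L.precompR E3 (w y) (newtH (x - y)),
    fun z => ?_, ?_, fun h h' => ?_⟩
  · have hwRz : ∀ y, R + ‖z - x‖ ≤ ‖z - y‖ → w y = 0 := fun y hy => hwR y <| by
      have := norm_add_le (z - x) (x - y)
      rw [sub_add_sub_cancel] at this
      linarith
    have h := hasFDerivAt_potential (ContinuousLinearMap.lsmul ℝ ℝ : ℝ →L[ℝ] ℝ →L[ℝ] ℝ)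
      (x := z) (α := 0) (by norm_num : (0 : ℝ) ≤ 4) hM' hw hK hG (by simpa using hwM') hwRz
      (fun v hv => hasFDerivAt_newtK hv) norm_newtK_le norm_newtG_le le_rfl zero_le_one
      (by norm_num) (by norm_num)
    convert! h using 1
    congr 1 with y
    simp [hL]
    rfl
  · exact hasFDerivAt_potential L (by norm_num : (0 : ℝ) ≤ 4) hM hw hG hH hwM hwR
      (fun v hv => hasFDerivAt_newtG hv) (fun v => norm_newtG_le v |>.trans_eq (by norm_num))
      norm_newtH_le hα.le zero_le_two (by norm_num) (by linarith)
  · obtain ⟨hI, hP⟩ := integral_precompR_apply L hM hw hH hwM hwR norm_newtH_le (by linarith) h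
    have hI' := hI.apply_continuousLinearMap h'
    rw [hP, ContinuousLinearMap.integral_apply hI]
    simp only [hL, ContinuousLinearMap.lsmul_apply, _root_.smul_apply, smul_eq_mul]
      at hI' ⊢
    exact ⟨hI', trivial⟩

/-! ### Truncated integrals -/

lemma newtH_single (v : E3) (i j : Fin 3) :
    newtH v (EuclideanSpace.single i 1) (EuclideanSpace.single j 1)
      = 3 * (‖v‖ ^ 5)⁻¹ * (v i * v j) - (if i = j then 1 else 0) * (‖v‖ ^ 3)⁻¹ := by
  simp [newtH, EuclideanSpace.inner_single_right, eq_comm]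
  split_ifs <;> ring

/-- Outside a centred ball, the Hessian kernel integrates to zero against a radial cutoff. -/
lemma integral_newtH_bump {ρ ε : ℝ} (hρ : 0 < ρ) (hε : 0 < ε) (i j : Fin 3) :
    Integrable (fun v : E3 => (closedBall (0 : E3) ε)ᶜ.indicator (fun v => bump ρ v *
      newtH v (EuclideanSpace.single i 1) (EuclideanSpace.single j 1)) v) ∧
    ∫ v : E3, (closedBall (0 : E3) ε)ᶜ.indicator (fun v => bump ρ v *
      newtH v (EuclideanSpace.single i 1) (EuclideanSpace.single j 1)) v = 0 := by
  obtain ⟨g, hgdef⟩ : ∃ g : ℝ → ℝ, g = (Set.Ioi ε).indicator fun r =>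
      Real.smoothTransition (2 - r ^ 2 / ρ ^ 2) * (3 * (r ^ 5)⁻¹) := ⟨_, rfl⟩
  have hmeas : Measurable g := by
    rw [hgdef]
    refine Measurable.indicator ?_ measurableSet_Ioi
    have := (Real.smoothTransition.contDiff (n := 0)).continuous.measurable
    exact (this.comp (by fun_prop)).mul (by fun_prop)
  have hg : Integrable fun v : E3 => g ‖v‖ * ‖v‖ ^ 2 := by
    refine Integrable.mono' (g := (closedBall (0 : E3) (2 * ρ)).indicator fun _ => 3 * (ε ^ 3)⁻¹)
      ((integrable_indicator_iff measurableSet_closedBall).2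
        (integrableOn_const measure_closedBall_lt_top.ne)) (by fun_prop) (.of_forall fun v => ?_)
    have hnn : 0 ≤ (closedBall (0 : E3) (2 * ρ)).indicator (fun _ => 3 * (ε ^ 3)⁻¹) v :=
      Set.indicator_nonneg (fun _ _ => by positivity) _
    by_cases hv : ε < ‖v‖
    · rw [hgdef, Set.indicator_of_mem (Set.mem_Ioi.2 hv)]
      by_cases hv2 : v ∈ closedBall (0 : E3) (2 * ρ)
      · rw [Set.indicator_of_mem hv2]
        have hpos : 0 < ‖v‖ := hε.trans hv
        have h1 := abs_bump_le (ρ := ρ) v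
        rw [mul_assoc, norm_mul, Real.norm_eq_abs]
        have h2 : 3 * (‖v‖ ^ 5)⁻¹ * ‖v‖ ^ 2 = 3 * (‖v‖ ^ 3)⁻¹ := by field_simp
        rw [h2, Real.norm_of_nonneg (by positivity)]
        refine (mul_le_mul_of_nonneg_right h1 (by positivity)).trans ?_
        rw [one_mul]
        gcongr
      · have : bump ρ v = 0 := bump_eq_zero hρ (by simpa using (not_le.1 (by simpa using hv2)).le)
        rw [bump] at this
        rw [this]
        simpa using hnn
    · rw [hgdef, Set.indicator_of_notMem (by simpa using hv)]
      simpa using hnn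
  have heq : (fun v : E3 => (closedBall (0 : E3) ε)ᶜ.indicator (fun v => bump ρ v *
      newtH v (EuclideanSpace.single i 1) (EuclideanSpace.single j 1)) v) =
      fun v => g ‖v‖ * (v i * v j) - (if i = j then 1 / 3 else 0) * (g ‖v‖ * ‖v‖ ^ 2) := by
    ext v
    by_cases hv : ε < ‖v‖
    · have hpos : ‖v‖ ≠ 0 := (hε.trans hv).ne'
      rw [Set.indicator_of_mem (by simpa using hv), hgdef,
        Set.indicator_of_mem (Set.mem_Ioi.2 hv), newtH_single, bump]
      split_ifs
      · field_simp
      · field_simp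
        ring
    · rw [Set.indicator_of_notMem (by simpa using hv), hgdef,
        Set.indicator_of_notMem (by simpa using hv)]
      simp
  rw [heq]
  refine ⟨(integrable_radial_mul hg i j).sub (hg.const_mul _), ?_⟩
  rw [integral_sub (integrable_radial_mul hg i j) (hg.const_mul _), integral_radial_mul hg,
    integral_const_mul, sub_self]

/-- **Second derivative of the Newtonian potential (spherical exclusion).**
For `u` bounded and Hölder continuous on a bounded open `D ⊂ ℝ³`, the Newtonian potential
`N(z) = ∫_D u(y)/(4π|z−y|) dy` is twice differentiable at `x ∈ D` and
`∂²N/∂x_i∂x_j(x) = p.v.∫_D ∂²/∂x_i∂x_j[1/(4π|x−y|)] u(y) dy − (δ_{ij}/3) u(x)`. -/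
theorem newtonian_second_derivative_principal_value
    (D : Set (EuclideanSpace ℝ (Fin 3))) (hDopen : IsOpen D) (hDbdd : Bornology.IsBounded D)
    (x : EuclideanSpace ℝ (Fin 3)) (hx : x ∈ D)
    (u : EuclideanSpace ℝ (Fin 3) → ℝ)
    (hu_bdd : ∃ C : ℝ, ∀ y ∈ D, |u y| ≤ C)
    (α : ℝ≥0) (hα0 : 0 < α) (hα1 : α ≤ 1)
    (C : ℝ≥0) (hu_holder : HolderOnWith C α u D)
    -- the Newtonian potential of u
    (N : EuclideanSpace ℝ (Fin 3) → ℝ)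
    (hN : N = fun z => ∫ y in D, u y / (4 * Real.pi * ‖z - y‖))
    -- the second-derivative kernel  ∂²/∂x_i∂x_j [1/(4π|x−y|)] = f_{ij}((x−y)/|x−y|)|x−y|^{−3}
    (Ker : Fin 3 → Fin 3 → EuclideanSpace ℝ (Fin 3) → EuclideanSpace ℝ (Fin 3) → ℝ)
    (hKer : Ker = fun i j z y =>
      (-(4 * Real.pi)⁻¹ * ((if i = j then (1 : ℝ) else 0)
          - 3 * (‖z - y‖⁻¹ • (z - y)) i * (‖z - y‖⁻¹ • (z - y)) j)) * (‖z - y‖ ^ 3)⁻¹) :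
    ∃ (N' : EuclideanSpace ℝ (Fin 3) → (EuclideanSpace ℝ (Fin 3) →L[ℝ] ℝ))
      (N'' : EuclideanSpace ℝ (Fin 3) →L[ℝ] EuclideanSpace ℝ (Fin 3) →L[ℝ] ℝ),
      (∀ᶠ z in 𝓝 x, HasFDerivAt N (N' z) z) ∧
      HasFDerivAt N' N'' x ∧
      ∀ i j : Fin 3,
        Tendsto
          (fun ε : ℝ => ∫ y in D \ Metric.closedBall x ε, Ker i j x y * u y)
          (𝓝[>] (0 : ℝ))
          (𝓝 (N'' (EuclideanSpace.single i 1) (EuclideanSpace.single j 1)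
              + (if i = j then (1 : ℝ) / 3 else 0) * u x)) := by
  have hα : (0 : ℝ) < α := by exact_mod_cast hα0
  obtain ⟨C₀, hC₀⟩ := hu_bdd
  have hC₀0 : 0 ≤ C₀ := (abs_nonneg _).trans (hC₀ x hx)
  obtain ⟨R₀, hR₀⟩ := hDbdd.subset_closedBall x
  obtain ⟨ρ, hρ, hρD⟩ := nhds_basis_closedBall.mem_iff.1 (hDopen.mem_nhds hx)
  obtain ⟨v, hv⟩ : ∃ v : E3 → ℝ, v = D.indicator u := ⟨_, rfl⟩
  have hvm : AEStronglyMeasurable v := by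
    rw [hv, aestronglyMeasurable_indicator_iff hDopen.measurableSet]
    exact (hu_holder.continuousOn hα0).aestronglyMeasurable hDopen.measurableSet
  have hvC : ∀ y, |v y| ≤ C₀ := fun y => by
    by_cases hy : y ∈ D
    · rw [hv, Set.indicator_of_mem hy]; exact hC₀ y hy
    · rw [hv, Set.indicator_of_notMem hy, abs_zero]; exact hC₀0
  have hux : |u x| ≤ C₀ := hC₀ x hx
  -- Subtracting a radial cutoff multiple of `u x` leaves a density of Hölder size at `x`.
  obtain ⟨b, hb⟩ : ∃ b : E3 → ℝ, b = fun y => bump ρ (y - x) := ⟨_, rfl⟩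
  have hbm : Continuous b := by
    rw [hb]; exact (contDiff_bump (n := 0)).continuous.comp (by fun_prop)
  obtain ⟨w, hw⟩ : ∃ w : E3 → ℝ, w = fun y => v y - u x * b y := ⟨_, rfl⟩
  have hwm : AEStronglyMeasurable w := by
    rw [hw]; exact hvm.sub (continuous_const.mul hbm).aestronglyMeasurable
  have hub : ∀ y, |u x * b y| ≤ C₀ := fun y => by
    rw [abs_mul, hb]
    exact (mul_le_mul hux (abs_bump_le _) (abs_nonneg _) hC₀0).trans_eq (mul_one _)
  have hwM' : ∀ y, ‖w y‖ ≤ 2 * C₀ := fun y => by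
    rw [hw, Real.norm_eq_abs]
    have := abs_sub (v y) (u x * b y)
    linarith [hvC y, hub y]
  have hbR : ∀ y, 2 * ρ ≤ ‖x - y‖ → b y = 0 := fun y hy => by
    rw [hb]; exact bump_eq_zero hρ (by rwa [norm_sub_rev])
  have hvR : ∀ y, R₀ + 1 ≤ ‖x - y‖ → v y = 0 := fun y hy => by
    rw [hv]
    refine Set.indicator_of_notMem (fun hyD => ?_) _
    have := hR₀ hyD
    rw [mem_closedBall, dist_eq_norm, norm_sub_rev] at this
    linarith
  have hwR : ∀ y, max (R₀ + 1) (2 * ρ) ≤ ‖x - y‖ → w y = 0 := fun y hy => by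
    rw [hw]
    simp only
    rw [hvR y ((le_max_left _ _).trans hy), hbR y ((le_max_right _ _).trans hy)]
    simp
  obtain ⟨M, hM⟩ : ∃ M : ℝ, M = C + 2 * C₀ * (ρ ^ (α : ℝ))⁻¹ := ⟨_, rfl⟩
  have hM0 : 0 ≤ M := by rw [hM]; positivity
  have hwM : ∀ y, ‖w y‖ ≤ M * ‖x - y‖ ^ (α : ℝ) := fun y => by
    rw [hM, add_mul]
    have hn : (0 : ℝ) ≤ ‖x - y‖ ^ (α : ℝ) := by positivity
    rcases le_total ‖x - y‖ ρ with hy | hy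
    · have hyD : y ∈ D := hρD (by rwa [mem_closedBall, dist_eq_norm, norm_sub_rev])
      have h1 : b y = 1 := by rw [hb]; exact bump_eq_one hρ (by rwa [norm_sub_rev])
      have h2 := hu_holder.dist_le hyD hx
      rw [Real.dist_eq, dist_eq_norm, norm_sub_rev] at h2
      have h3 : w y = u y - u x := by rw [hw]; simp [h1, hv, hyD]
      rw [h3, Real.norm_eq_abs]
      exact h2.trans (le_add_of_nonneg_right (by positivity))
    · refine (hwM' y).trans ?_
      have h1 : 1 ≤ (ρ ^ (α : ℝ))⁻¹ * ‖x - y‖ ^ (α : ℝ) := by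
        rw [inv_mul_eq_div, one_le_div (by positivity)]
        gcongr
      have h2 : 0 ≤ (C : ℝ) * ‖x - y‖ ^ (α : ℝ) := by positivity
      have h3 := mul_le_mul_of_nonneg_left h1 (by positivity : 0 ≤ 2 * C₀)
      rw [mul_assoc]
      linarith
  obtain ⟨P', P'', hP', hP'', hP⟩ :=
    exists_potential_hessian hα hM0 (by positivity) hwm hwM hwM' hwR
  obtain ⟨Q', Q'', hQ', hQ'', hQ⟩ := exists_bumpPotential_hessian hρ
  -- The potential of `u` splits along `u = w + u x • b` on `D`.
  have hNeq : N = fun z => (4 * Real.pi)⁻¹ * ((∫ y, w y * newtK (z - y)) +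
      u x * ∫ y, bump ρ y * newtK (z - x - y)) := by
    rw [hN]
    ext z
    have hK := (stronglyMeasurable_newtK (E := E3)).aestronglyMeasurable (μ := volume)
    have hIw := integrable_potential' (ContinuousLinearMap.lsmul ℝ ℝ : ℝ →L[ℝ] ℝ →L[ℝ] ℝ) z
      hM0 hwm hK hwM hwR norm_newtK_le hα.le (by norm_num)
    have hIb := integrable_potential' (ContinuousLinearMap.lsmul ℝ ℝ : ℝ →L[ℝ] ℝ →L[ℝ] ℝ) z
      (M := 1) (α := 0) zero_le_one hbm.aestronglyMeasurable hK
      (fun y => by rw [hb]; simpa using abs_bump_le _) hbR norm_newtK_le le_rfl (by norm_num)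
    simp only [ContinuousLinearMap.lsmul_apply, smul_eq_mul] at hIw hIb
    have htr : ∫ y, bump ρ y * newtK (z - x - y) = ∫ y, b y * newtK (z - y) := by
      rw [← integral_sub_right_eq_self _ x, hb]
      congr 1 with y
      rw [sub_sub_sub_cancel_right]
    rw [htr, ← integral_const_mul, ← integral_add hIw (hIb.const_mul _), ← integral_const_mul,
      ← integral_indicator hDopen.measurableSet]
    congr 1 with y
    have : w y * newtK (z - y) + u x * (b y * newtK (z - y)) = v y * newtK (z - y) := by
      rw [hw]; ring
    rw [this, hv]
    by_cases hy : y ∈ D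
    · simp only [Set.indicator_of_mem hy, newtK]
      rw [div_eq_mul_inv, mul_inv]
      ring
    · simp [hy]
  have hQz : ∀ z, HasFDerivAt (fun z => ∫ y, bump ρ y * newtK (z - x - y)) (Q' (z - x)) z :=
    fun z => (hasFDerivAt_comp_sub x).2 (hQ' (z - x))
  have hQx : HasFDerivAt (fun z => Q' (z - x)) Q'' x :=
    (hasFDerivAt_comp_sub x).2 (by rwa [sub_self])
  refine ⟨fun z => (4 * Real.pi)⁻¹ • (P' z + u x • Q' (z - x)),
    (4 * Real.pi)⁻¹ • (P'' + u x • Q''), .of_forall fun z => ?_, ?_, fun i j => ?_⟩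
  · rw [hNeq]
    exact ((hP' z).add ((hQz z).const_mul (u x))).const_mul _
  · have h1 : HasFDerivAt (fun z => u x • Q' (z - x)) (u x • Q'') x := hQx.const_smul (u x)
    exact (hP''.add h1).const_smul (4 * Real.pi)⁻¹
  obtain ⟨hIH, hPH⟩ := hP (EuclideanSpace.single i 1) (EuclideanSpace.single j 1)
  obtain ⟨k, hk⟩ : ∃ k : E3 → ℝ, k = fun v =>
    newtH v (EuclideanSpace.single i 1) (EuclideanSpace.single j 1) := ⟨_, rfl⟩
  have hkx : ∀ v : E3, newtH v (EuclideanSpace.single i 1) (EuclideanSpace.single j 1) = k v :=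
    fun v => by rw [hk]
  simp only [hkx] at hIH hPH
  have hval : ((4 * Real.pi)⁻¹ • (P'' + u x • Q'')) (EuclideanSpace.single i 1)
      (EuclideanSpace.single j 1) + (if i = j then (1 : ℝ) / 3 else 0) * u x
      = (4 * Real.pi)⁻¹ * ∫ y, w y * k (x - y) := by
    simp only [_root_.smul_apply, _root_.add_apply, smul_eq_mul, hPH, hQ]
    field_simp
    ring
  rw [hval]
  -- At `y = x` both sides vanish, by the conventions for inverses of zero.
  have hKk : ∀ y, Ker i j x y = (4 * Real.pi)⁻¹ * k (x - y) := fun y => by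
    rw [hKer, hk]
    simp only [newtH_single, PiLp.smul_apply, smul_eq_mul]
    rcases eq_or_ne (‖x - y‖) 0 with h0 | h0
    · simp [h0]
    · field_simp
      ring
  -- The cutoff contributes nothing outside the excluded ball, so `u` may be replaced by `w`.
  have hcut : ∀ ε > 0, ∫ y in D \ closedBall x ε, Ker i j x y * u y
      = (4 * Real.pi)⁻¹ * ∫ y, (closedBall x ε)ᶜ.indicator (fun y => w y * k (x - y)) y := by
    intro ε hε
    obtain ⟨hIb, hb0⟩ := integral_newtH_bump hρ hε i j
    simp only [hkx] at hIb hb0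
    have hsh : (fun y => (closedBall x ε)ᶜ.indicator (fun y => b y * k (x - y)) y) = fun y =>
        (fun v : E3 => (closedBall (0 : E3) ε)ᶜ.indicator (fun v => bump ρ v * k v) v) (y - x) := by
      ext y
      have hev : k (x - y) = k (y - x) := by
        rw [hk, ← neg_sub y x]
        simp only [newtH_single, norm_neg, PiLp.neg_apply, neg_mul_neg]
      beta_reduce
      by_cases hy : y ∈ closedBall x ε
      · rw [Set.indicator_of_notMem (by simpa using hy),
          Set.indicator_of_notMem (by simpa [dist_eq_norm] using hy)]
      · rw [Set.indicator_of_mem hy,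
          Set.indicator_of_mem (by simpa [dist_eq_norm] using hy), hev, hb]
    have hIb' := hIb.comp_sub_right x
    rw [← integral_sub_right_eq_self _ x] at hb0
    rw [← hsh] at hIb' hb0
    have hIw := hIH.indicator (measurableSet_closedBall (x := x) (ε := ε)).compl
    have hsplit : ∫ y, (closedBall x ε)ᶜ.indicator (fun y => w y * k (x - y)) y
        = ∫ y, ((closedBall x ε)ᶜ.indicator (fun y => w y * k (x - y)) y
          + u x * (closedBall x ε)ᶜ.indicator (fun y => b y * k (x - y)) y) := by
      rw [integral_add hIw (hIb'.const_mul _), integral_const_mul, hb0, mul_zero, add_zero]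
    rw [hsplit, ← integral_const_mul,
      ← integral_indicator (hDopen.measurableSet.diff measurableSet_closedBall)]
    congr 1 with y
    by_cases hy : y ∈ closedBall x ε
    · rw [Set.indicator_of_notMem (by simp [hy]), Set.indicator_of_notMem (by simpa using hy),
        Set.indicator_of_notMem (by simpa using hy)]
      simp
    have hyc : y ∈ (closedBall x ε)ᶜ := hy
    rw [Set.indicator_of_mem hyc, Set.indicator_of_mem hyc, hw, hv]
    by_cases hyD : y ∈ D
    · have hyd : y ∈ D \ closedBall x ε := ⟨hyD, hy⟩
      rw [Set.indicator_of_mem hyd, hKk]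
      simp only [Set.indicator_of_mem hyD]
      ring
    · rw [Set.indicator_of_notMem (fun h : y ∈ D \ closedBall x ε => hyD h.1)]
      simp only [Set.indicator_of_notMem hyD]
      ring
  refine Tendsto.congr' (eventually_mem_nhdsWithin.mono fun ε hε => (hcut ε hε).symm) ?_
  refine Tendsto.const_mul _ ?_
  -- The kernel is absolutely integrable against `w`, so the truncation can be removed.
  refine tendsto_integral_filter_of_dominated_convergence (fun y => ‖w y * k (x - y)‖)
    (.of_forall fun ε => (hIH.indicator measurableSet_closedBall.compl).aestronglyMeasurable)
    (.of_forall fun ε => .of_forall fun y => norm_indicator_le_norm_self _ _) hIH.norm ?_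
  filter_upwards [compl_mem_ae_iff.2 (measure_singleton x)] with y hy
  have hpos : 0 < dist y x := dist_pos.2 hy
  refine tendsto_const_nhds.congr' ?_
  filter_upwards [nhdsWithin_le_nhds (gt_mem_nhds hpos)] with ε hε
  rw [Set.indicator_of_mem (by simpa using hε)]
end

section
/- Let H be a complex Hilbert space, T a bounded self-adjoint operator on H, and λ₀ an isolated point of the spectrum of T that is an eigenvalue whose eigenspace is one-dimensional. Then there exist ε > 0 and K > 0 such that for every bounded linear operator S on H with ‖S − T‖ < K, the spectrum of S intersected with the open disk of center λ₀ and radius ε consists of exactly one point λ̃, and λ̃ is an eigenvalue of S. -/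
/-!
Let `φ` be the normalised eigenvector, `P = ⟪φ, ·⟫ φ`, and `A(S, z) = S - z + P`. Functional calculus
identifies `P` with the spectral projection of `T` at the isolated point `λ₀`, so that
`A(T, λ₀)` is the value of the functional calculus at a nowhere vanishing function, hence
invertible (`isUnit_sub_add_rankOneProj`). Invertibility is an open condition, so `A(S, z)` is
invertible for `(S, z)` near `(T, λ₀)`, and there `S - z = A(S, z) - P` is a rank one perturbation of
an invertible operator: `z` is in the spectrum of `S` iff `⟪φ, A(S, z)⁻¹ φ⟫ = 1`, and then
`A(S, z)⁻¹ φ` is an eigenvector (`mem_spectrum_iff`, `eigenvector_of_inner_eq_one`).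

It remains to see that `z ↦ 1 - ⟪φ, A(S, z)⁻¹ φ⟫` has exactly one zero near `λ₀`. By the resolvent
identity, `F(z) = z + 1 - ⟪φ, A(S, z)⁻¹ φ⟫` satisfies
`F(z) - F(w) = (z - w) (1 - ⟪φ, A(S, z)⁻¹ A(S, w)⁻¹ φ⟫)`, and the last factor is continuous in
`(S, z, w)` and vanishes at `(T, λ₀, λ₀)`. So `F` is a contraction near `λ₀`, almost fixing `λ₀`,
and its unique fixed point is the unique zero.
-/

open Filter Topology

open scoped InnerProductSpace

/-- The operator `ψ ↦ ⟪φ, ψ⟫ φ`; for `‖φ‖ = 1` it is the orthogonal projection onto `ℂ φ`. -/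
noncomputable def rankOneProj {H : Type*} [NormedAddCommGroup H] [InnerProductSpace ℂ H]
    (φ : H) : H →L[ℂ] H :=
  (innerSL ℂ φ).smulRight φ

section

variable {H : Type*} [NormedAddCommGroup H] [InnerProductSpace ℂ H]

lemma rankOneProj_apply (φ ψ : H) : rankOneProj φ ψ = ⟪φ, ψ⟫_ℂ • φ := by
  simp [rankOneProj]

/-- If `λ₀` is isolated in the spectrum of a self-adjoint `T` and `φ` is a unit vector spanning the
eigenspace, then adding the projection onto `ℂ φ` makes `T - λ₀` invertible: this projection is the
spectral projection `χ_{λ₀}(T)`. -/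
lemma isUnit_sub_add_rankOneProj [CompleteSpace H]
    (T : H →L[ℂ] H) (hT : IsSelfAdjoint T) (lam0 : ℂ)
    (h_isolated : ∃ U : Set ℂ, IsOpen U ∧ lam0 ∈ U ∧ spectrum ℂ T ∩ U = {lam0})
    (φ : H) (hφ : ‖φ‖ = 1) (hφ_eig : T φ = lam0 • φ)
    (h_simple : ∀ ψ : H, T ψ = lam0 • ψ → ∃ c : ℂ, ψ = c • φ) :
    IsUnit (T - lam0 • (1 : H →L[ℂ] H) + rankOneProj φ) := by
  classical
  obtain ⟨U, hUo, hU, hUs⟩ := h_isolated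
  have hTn : IsStarNormal T := hT.isStarNormal
  have hmem : ∀ x ∈ spectrum ℂ T, x ∈ U → x = lam0 := fun x hx hxU => by
    have : x ∈ spectrum ℂ T ∩ U := ⟨hx, hxU⟩
    rwa [hUs] at this
  -- A function agreeing off `λ₀` with one continuous there is continuous on the spectrum, whatever
  -- its value at `λ₀`, because `λ₀` is isolated.
  have hcont : ∀ (f g : ℂ → ℂ), (∀ x, x ≠ lam0 → f x = g x) →
      (∀ x, x ≠ lam0 → ContinuousAt g x) → ContinuousOn f (spectrum ℂ T) := by
    intro f g hfg hg x hx
    by_cases hxl : x = lam0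
    · have : f =ᶠ[𝓝[spectrum ℂ T] x] fun _ => f x := by
        have h1 : ∀ᶠ y in 𝓝[spectrum ℂ T] x, y ∈ U :=
          nhdsWithin_le_nhds (hUo.mem_nhds (hxl ▸ hU))
        filter_upwards [h1, self_mem_nhdsWithin] with y hy hys
        rw [hmem y hys hy, hxl]
      exact (continuousWithinAt_const (b := f x)).congr_of_eventuallyEq this rfl
    · have h1 : f =ᶠ[𝓝 x] g := by
        filter_upwards [isOpen_ne.mem_nhds hxl] with y hy using hfg y hy
      exact ((hg x hxl).congr h1.symm).continuousWithinAt
  let χ : ℂ → ℂ := fun x => if x = lam0 then 1 else 0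
  have hχ : ContinuousOn χ (spectrum ℂ T) :=
    hcont χ (fun _ => 0) (fun x hx => by simp [χ, hx]) fun _ _ => continuousAt_const
  have hinv : ContinuousOn (fun x => (x - lam0)⁻¹) (spectrum ℂ T) :=
    hcont _ _ (fun _ _ => rfl) fun x hx =>
      (continuousAt_id.sub continuousAt_const).inv₀ (sub_ne_zero.2 hx)
  have hsub : ContinuousOn (fun x : ℂ => x - lam0) (spectrum ℂ T) := by fun_prop
  have hT0 : cfc (fun x : ℂ => x - lam0) T = T - lam0 • (1 : H →L[ℂ] H) := by
    rw [cfc_sub (fun x => x) (fun _ => lam0) T, cfc_id' ℂ T, cfc_const lam0 T,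
      Algebra.algebraMap_eq_smul_one]
  set E := cfc χ T with hE
  have hEsa : IsSelfAdjoint E := by
    rw [IsSelfAdjoint, hE, ← cfc_star]
    congr 1
    funext x
    by_cases hx : x = lam0 <;> simp [χ, hx]
  have hTE : (T - lam0 • (1 : H →L[ℂ] H)) * E = 0 := by
    rw [← hT0, hE, ← cfc_mul _ _ T hsub hχ, ← cfc_zero ℂ T]
    congr 1
    funext x
    by_cases hx : x = lam0 <;> simp [χ, hx]
  have hGT : cfc (fun x => (x - lam0)⁻¹) T * (T - lam0 • (1 : H →L[ℂ] H)) = 1 - E := by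
    rw [← hT0, hE, ← cfc_mul _ _ T hinv hsub, ← cfc_one ℂ T,
      ← cfc_sub _ _ T (by fun_prop) hχ]
    congr 1
    funext x
    by_cases hx : x = lam0
    · simp [χ, hx]
    · simp [χ, hx, inv_mul_cancel₀ (sub_ne_zero.2 hx)]
  have hEφ : E φ = φ := by
    have := congrArg (fun B : H →L[ℂ] H => B φ) hGT
    simp [hφ_eig] at this
    exact (sub_eq_zero.1 this.symm).symm
  have hEP : E = rankOneProj φ := by
    ext ψ
    rw [rankOneProj_apply]
    have h1 : T (E ψ) = lam0 • E ψ := by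
      have := congrArg (fun B : H →L[ℂ] H => B ψ) hTE
      simpa [sub_eq_zero] using this
    obtain ⟨c, hc⟩ := h_simple _ h1
    have h2 : ⟪φ, E ψ⟫_ℂ = ⟪φ, ψ⟫_ℂ := by
      have := hEsa.isSymmetric φ ψ
      simp only [ContinuousLinearMap.coe_coe] at this
      rw [← this, hEφ]
    rw [hc, inner_smul_right, inner_self_eq_norm_sq_to_K, hφ] at h2
    rw [hc, ← h2]
    simp
  rw [← hEP, ← hT0, hE, ← cfc_add _ _ _ hsub hχ]
  refine (isUnit_cfc_iff (fun x => x - lam0 + χ x) T (hsub.add hχ)).2 fun x _ => ?_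
  by_cases hx : x = lam0
  · simp [χ, hx]
  · simpa [χ, hx] using sub_ne_zero.2 hx

/-- Let `R` be a right inverse of `A = S - z + P`. A zero of `1 - ⟪φ, R φ⟫` yields the eigenvector
`R φ` of `S`. -/
lemma eigenvector_of_inner_eq_one {S : H →L[ℂ] H} {z : ℂ} {φ : H} {R : H →L[ℂ] H}
    (hR : (S - z • (1 : H →L[ℂ] H) + rankOneProj φ) * R = 1) (h : ⟪φ, R φ⟫_ℂ = 1) :
    R φ ≠ 0 ∧ S (R φ) = z • R φ := by
  constructor
  · intro h0
    simp [h0] at h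
  · have := congrArg (fun B : H →L[ℂ] H => B φ) hR
    simpa [rankOneProj_apply, h, sub_eq_zero] using this

/-- When `A = S - z + P` is invertible with inverse `R`, the point `z` is in the spectrum of `S` iff
`⟪φ, R φ⟫ = 1`. Otherwise the inverse of `S - z` is given by the Sherman–Morrison formula. -/
lemma mem_spectrum_iff {S : H →L[ℂ] H} {z : ℂ} {φ : H} {R : H →L[ℂ] H}
    (hR : (S - z • (1 : H →L[ℂ] H) + rankOneProj φ) * R = 1)
    (hR' : R * (S - z • (1 : H →L[ℂ] H) + rankOneProj φ) = 1) :
    z ∈ spectrum ℂ S ↔ ⟪φ, R φ⟫_ℂ = 1 := by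
  have hneg : IsUnit (algebraMap ℂ (H →L[ℂ] H) z - S) ↔ IsUnit (S - z • (1 : H →L[ℂ] H)) := by
    rw [← IsUnit.neg_iff, neg_sub, Algebra.algebraMap_eq_smul_one]
  rw [spectrum.mem_iff, hneg]
  constructor
  · intro hn
    by_contra hk
    apply hn
    set P := rankOneProj φ with hP
    set A := S - z • (1 : H →L[ℂ] H) + P with hA
    set k := ⟪φ, R φ⟫_ℂ with hkdef
    have hPRP : P * R * P = k • P := by
      ext ψ
      simp [hP, rankOneProj_apply, hkdef, smul_smul, mul_comm]
    have hk' : 1 - k ≠ 0 := sub_ne_zero.2 (Ne.symm hk)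
    have hSA : S - z • (1 : H →L[ℂ] H) = A - P := by rw [hA]; abel
    have hc : (1 - k)⁻¹ - (1 - k)⁻¹ * k = 1 := by field_simp
    rw [hSA, isUnit_iff_exists]
    refine ⟨R + (1 - k)⁻¹ • (R * P * R), ?_, ?_⟩
    · have e1 : (A - P) * (R + (1 - k)⁻¹ • (R * P * R))
          = A * R + (1 - k)⁻¹ • (A * R * P * R) - P * R - (1 - k)⁻¹ • (P * R * P * R) := by
        simp only [sub_mul, mul_add, mul_smul_comm, mul_assoc, smul_sub]; abel
      rw [e1, hR, hPRP, one_mul, smul_mul_assoc, smul_smul]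
      have : (1 - k)⁻¹ • (P * R) - ((1 - k)⁻¹ * k) • (P * R) = P * R := by
        rw [← sub_smul, hc, one_smul]
      refine sub_eq_zero.1 (Eq.trans ?_ (sub_eq_zero.2 this))
      abel
    · have e1 : (R + (1 - k)⁻¹ • (R * P * R)) * (A - P)
          = R * A + (1 - k)⁻¹ • (R * P * (R * A)) - R * P - (1 - k)⁻¹ • (R * (P * R * P)) := by
        simp only [mul_sub, add_mul, smul_mul_assoc, mul_assoc]; abel
      rw [e1, hR', hPRP, mul_one, mul_smul_comm, smul_smul]
      have : (1 - k)⁻¹ • (R * P) - ((1 - k)⁻¹ * k) • (R * P) = R * P := by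
        rw [← sub_smul, hc, one_smul]
      refine sub_eq_zero.1 (Eq.trans ?_ (sub_eq_zero.2 this))
      abel
  · intro hk hu
    obtain ⟨h0, hS⟩ := eigenvector_of_inner_eq_one hR hk
    obtain ⟨B, -, hB⟩ := isUnit_iff_exists.1 hu
    have := congrArg (fun B : H →L[ℂ] H => B (R φ)) hB
    simp [hS] at this
    exact h0 this.symm

/-- A map that is `1/2`-Lipschitz on the ball `B(a, ε)` and moves `a` by at most `ε / 4` has a unique
fixed point in this ball. -/
lemma exists_unique_fixed {F : ℂ → ℂ} {a : ℂ} {ε : ℝ} (hε : 0 < ε)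
    (hF : ∀ z ∈ Metric.ball a ε, ∀ w ∈ Metric.ball a ε, ‖F z - F w‖ ≤ 1 / 2 * ‖z - w‖)
    (ha : ‖F a - a‖ ≤ ε / 4) :
    ∃ z ∈ Metric.ball a ε, F z = z ∧ ∀ w ∈ Metric.ball a ε, F w = w → w = z := by
  have haε : a ∈ Metric.ball a ε := Metric.mem_ball_self hε
  have hsub : Metric.closedBall a (ε / 2) ⊆ Metric.ball a ε :=
    Metric.closedBall_subset_ball (by linarith)
  have hmaps : Set.MapsTo F (Metric.closedBall a (ε / 2)) (Metric.closedBall a (ε / 2)) := by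
    intro z hz
    have h1 := hF z (hsub hz) a haε
    rw [mem_closedBall_iff_norm] at hz ⊢
    have h2 : F z - a = (F z - F a) + (F a - a) := by ring
    have h3 := norm_add_le (F z - F a) (F a - a)
    rw [h2]
    linarith
  have hcontr : ContractingWith (1 / 2) (hmaps.restrict F _ _) := by
    refine ⟨by rw [← NNReal.coe_lt_coe]; norm_num, LipschitzWith.of_dist_le_mul ?_⟩
    intro x y
    have := hF x (hsub x.2) y (hsub y.2)
    rw [Subtype.dist_eq, Subtype.dist_eq, dist_eq_norm, dist_eq_norm]
    simpa using this
  obtain ⟨z, hz, hfix, -⟩ := hcontr.exists_fixedPoint' Metric.isClosed_closedBall.isComplete hmaps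
    (Metric.mem_closedBall_self (by linarith)) (edist_ne_top a (F a))
  refine ⟨z, hsub hz, hfix, fun w hw hFw => ?_⟩
  have h1 := hF w hw z (hsub hz)
  rw [hFw, hfix.eq] at h1
  have h2 : ‖w - z‖ = 0 := by linarith [norm_nonneg (w - z)]
  exact sub_eq_zero.1 (norm_eq_zero.1 h2)

/-- The conclusion of the theorem for a unit eigenvector `φ` of `T` such that `T - λ₀ + P` is
invertible. -/
lemma perturbation_of_isUnit [CompleteSpace H] (T : H →L[ℂ] H) (lam0 : ℂ)
    (φ : H) (hφ : ‖φ‖ = 1) (hφ_eig : T φ = lam0 • φ)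
    (hA : IsUnit (T - lam0 • (1 : H →L[ℂ] H) + rankOneProj φ)) :
    ∃ ε : ℝ, 0 < ε ∧ ∃ K : ℝ, 0 < K ∧
      ∀ S : H →L[ℂ] H, ‖S - T‖ < K →
        ∃ lamt : ℂ,
          spectrum ℂ S ∩ Metric.ball lam0 ε = {lamt} ∧
          ∃ ψ : H, ψ ≠ 0 ∧ S ψ = lamt • ψ := by
  let A : (H →L[ℂ] H) → ℂ → (H →L[ℂ] H) :=
    fun S z => S - z • (1 : H →L[ℂ] H) + rankOneProj φ
  let R : (H →L[ℂ] H) → ℂ → (H →L[ℂ] H) := fun S z => Ring.inverse (A S z)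
  have hA0 : IsUnit (A T lam0) := hA
  have hAc : Continuous fun p : (H →L[ℂ] H) × ℂ => A p.1 p.2 := by
    simp only [A]; fun_prop
  have hRc : ContinuousAt (fun p : (H →L[ℂ] H) × ℂ => R p.1 p.2) (T, lam0) := by
    obtain ⟨u, hu⟩ := hA0
    have h1 : ContinuousAt Ring.inverse (A T lam0) := hu ▸ NormedRing.inverse_continuousAt u
    exact ContinuousAt.comp (f := fun p : (H →L[ℂ] H) × ℂ => A p.1 p.2) (x := (T, lam0)) h1
      hAc.continuousAt
  have hR0 : R T lam0 φ = φ := by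
    have h1 : A T lam0 φ = φ := by
      simp [A, hφ_eig, rankOneProj_apply, hφ]
    have h2 := congrArg (fun B : H →L[ℂ] H => B φ) (Ring.inverse_mul_cancel _ hA0)
    simpa [h1] using h2
  have hunit : ∀ᶠ p : (H →L[ℂ] H) × ℂ in 𝓝 (T, lam0), IsUnit (A p.1 p.2) :=
    (Units.isOpen.preimage hAc).mem_nhds hA0
  have hfac : ∀ᶠ q : (H →L[ℂ] H) × ℂ × ℂ in 𝓝 (T, lam0, lam0),
      ‖1 - ⟪φ, R q.1 q.2.1 (R q.1 q.2.2 φ)⟫_ℂ‖ < 1 / 2 := by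
    have c1 : ContinuousAt (fun q : (H →L[ℂ] H) × ℂ × ℂ => R q.1 q.2.1) (T, lam0, lam0) :=
      ContinuousAt.comp (f := fun q : (H →L[ℂ] H) × ℂ × ℂ => (q.1, q.2.1))
        (x := (T, lam0, lam0)) hRc (by fun_prop)
    have c2 : ContinuousAt (fun q : (H →L[ℂ] H) × ℂ × ℂ => R q.1 q.2.2) (T, lam0, lam0) :=
      ContinuousAt.comp (f := fun q : (H →L[ℂ] H) × ℂ × ℂ => (q.1, q.2.2))
        (x := (T, lam0, lam0)) hRc (by fun_prop)
    have c3 : ContinuousAt (fun q : (H →L[ℂ] H) × ℂ × ℂ =>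
        ‖1 - ⟪φ, R q.1 q.2.1 (R q.1 q.2.2 φ)⟫_ℂ‖) (T, lam0, lam0) :=
      (continuousAt_const.sub (ContinuousAt.inner (𝕜 := ℂ) continuousAt_const
        (c1.clm_apply (c2.clm_apply continuousAt_const)))).norm
    refine c3.eventually_lt_const ?_
    simp [hR0, hφ]
  obtain ⟨δ₁, hδ₁, h₁⟩ := Metric.eventually_nhds_iff.1 hunit
  obtain ⟨δ₂, hδ₂, h₂⟩ := Metric.eventually_nhds_iff.1 hfac
  let ε := min δ₁ δ₂
  have hε : 0 < ε := lt_min hδ₁ hδ₂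
  have hbase : ∀ᶠ S : H →L[ℂ] H in 𝓝 T, ‖1 - ⟪φ, R S lam0 φ⟫_ℂ‖ < ε / 4 := by
    have c1 : ContinuousAt (fun S : H →L[ℂ] H => R S lam0) T :=
      ContinuousAt.comp (f := fun S : H →L[ℂ] H => (S, lam0)) (x := T) hRc (by fun_prop)
    have c3 : ContinuousAt (fun S : H →L[ℂ] H => ‖1 - ⟪φ, R S lam0 φ⟫_ℂ‖) T :=
      (continuousAt_const.sub (ContinuousAt.inner (𝕜 := ℂ) continuousAt_const
        (c1.clm_apply continuousAt_const))).norm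
    refine c3.eventually_lt_const ?_
    simpa [hR0, hφ] using hε
  obtain ⟨δ₃, hδ₃, h₃⟩ := Metric.eventually_nhds_iff.1 hbase
  refine ⟨ε, hε, min ε δ₃, lt_min hε hδ₃, fun S hS => ?_⟩
  rw [← dist_eq_norm, lt_min_iff] at hS
  have hU : ∀ z ∈ Metric.ball lam0 ε, IsUnit (A S z) := fun z hz =>
    h₁ (y := (S, z)) ((max_lt hS.1 hz).trans_le (min_le_left _ _))
  have hAR : ∀ z ∈ Metric.ball lam0 ε, A S z * R S z = 1 := fun z hz =>
    Ring.mul_inverse_cancel _ (hU z hz)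
  have hRA : ∀ z ∈ Metric.ball lam0 ε, R S z * A S z = 1 := fun z hz =>
    Ring.inverse_mul_cancel _ (hU z hz)
  have hLip : ∀ z ∈ Metric.ball lam0 ε, ∀ w ∈ Metric.ball lam0 ε,
      ‖(z + (1 - ⟪φ, R S z φ⟫_ℂ)) - (w + (1 - ⟪φ, R S w φ⟫_ℂ))‖ ≤ 1 / 2 * ‖z - w‖ := by
    intro z hz w hw
    have hres : R S z - R S w = (z - w) • (R S z * R S w) := by
      have e1 : A S w - A S z = (z - w) • (1 : H →L[ℂ] H) := by
        simp only [A, sub_smul]; abel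
      calc R S z - R S w = R S z * (A S w * R S w) - (R S z * A S z) * R S w := by
            rw [hAR w hw, hRA z hz, mul_one, one_mul]
        _ = R S z * (A S w - A S z) * R S w := by noncomm_ring
        _ = _ := by rw [e1]; simp
    have hin : ⟪φ, R S z φ⟫_ℂ - ⟪φ, R S w φ⟫_ℂ = (z - w) * ⟪φ, R S z (R S w φ)⟫_ℂ := by
      rw [← inner_sub_right, ← sub_apply, hres]
      simp [inner_smul_right]
    have e2 : (z + (1 - ⟪φ, R S z φ⟫_ℂ)) - (w + (1 - ⟪φ, R S w φ⟫_ℂ))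
        = (1 - ⟪φ, R S z (R S w φ)⟫_ℂ) * (z - w) := by
      linear_combination -hin
    rw [e2, norm_mul]
    have := h₂ (y := (S, z, w)) ((max_lt hS.1 (max_lt hz hw)).trans_le (min_le_right _ _))
    exact mul_le_mul_of_nonneg_right this.le (norm_nonneg _)
  obtain ⟨z, hz, hfix, huniq⟩ := exists_unique_fixed
    (F := fun z => z + (1 - ⟪φ, R S z φ⟫_ℂ)) hε hLip (by simpa using (h₃ hS.2).le)
  have hone : ∀ w, w + (1 - ⟪φ, R S w φ⟫_ℂ) = w ↔ ⟪φ, R S w φ⟫_ℂ = 1 := fun w => by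
    rw [add_eq_left, sub_eq_zero, eq_comm]
  refine ⟨z, ?_, R S z φ, eigenvector_of_inner_eq_one (hAR z hz) ((hone z).1 hfix)⟩
  ext w
  simp only [Set.mem_inter_iff, Set.mem_singleton_iff]
  constructor
  · rintro ⟨hws, hw⟩
    exact huniq w hw ((hone w).2 ((mem_spectrum_iff (hAR w hw) (hRA w hw)).1 hws))
  · rintro rfl
    exact ⟨(mem_spectrum_iff (hAR w hz) (hRA w hz)).2 ((hone w).1 hfix), hz⟩

end

/-- **Stability of an isolated simple eigenvalue under small bounded perturbations.**
If `λ₀` is an isolated point of the spectrum of a bounded self-adjoint operator `T` and an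
eigenvalue with one-dimensional eigenspace, then there are `ε, K > 0` such that every bounded
operator `S` with `‖S − T‖ < K` has exactly one point of its spectrum in the open disk
`B(λ₀,ε)`, and this point is an eigenvalue of `S`. -/
theorem isolated_simple_eigenvalue_perturbation
    {H : Type*} [NormedAddCommGroup H] [InnerProductSpace ℂ H] [CompleteSpace H]
    (T : H →L[ℂ] H) (hT : IsSelfAdjoint T)
    (lam0 : ℂ) (h_spec : lam0 ∈ spectrum ℂ T)
    (h_isolated : ∃ U : Set ℂ, IsOpen U ∧ lam0 ∈ U ∧ spectrum ℂ T ∩ U = {lam0})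
    (φ0 : H) (hφ0_ne : φ0 ≠ 0) (hφ0_eig : T φ0 = lam0 • φ0)
    (h_simple : ∀ ψ : H, T ψ = lam0 • ψ → ∃ c : ℂ, ψ = c • φ0) :
    ∃ ε : ℝ, 0 < ε ∧ ∃ K : ℝ, 0 < K ∧
      ∀ S : H →L[ℂ] H, ‖S - T‖ < K →
        ∃ lamt : ℂ,
          spectrum ℂ S ∩ Metric.ball lam0 ε = {lamt} ∧
          ∃ ψ : H, ψ ≠ 0 ∧ S ψ = lamt • ψ := by
  have hn : (‖φ0‖ : ℂ) ≠ 0 := by simpa using hφ0_ne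
  have hφ : ‖(‖φ0‖ : ℂ)⁻¹ • φ0‖ = 1 := by
    rw [norm_smul, norm_inv, Complex.norm_real, norm_norm,
      inv_mul_cancel₀ (norm_ne_zero_iff.2 hφ0_ne)]
  have hφ_eig : T ((‖φ0‖ : ℂ)⁻¹ • φ0) = lam0 • ((‖φ0‖ : ℂ)⁻¹ • φ0) := by
    rw [map_smul, hφ0_eig, smul_comm]
  refine perturbation_of_isUnit T lam0 _ hφ hφ_eig
    (isUnit_sub_add_rankOneProj T hT lam0 h_isolated _ hφ hφ_eig fun ψ hψ => ?_)
  obtain ⟨c, hc⟩ := h_simple ψ hψ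
  exact ⟨c * ‖φ0‖, by rw [smul_smul, mul_assoc, mul_inv_cancel₀ hn, mul_one, hc]⟩
end

section
/- Let B ⊂ ℝ³ be a bounded open set with C¹ boundary, outward unit normal ν and surface measure σ, and let κ ∈ ℂ with Im κ ≥ 0. Set H(x,z) = G⁰(x,z) − G^κ(x,z) = (1 − e^{iκ|x−z|})/(4π|x−z|), extended continuously to the diagonal by H(x,x) = −iκ/(4π). Then for every constant vector c ∈ ℝ³: ⟨(T_B⁰ − T_B^κ)[c], c⟩_{L²(B,ℂ³)} = c · M_B^κ c − κ² ( ∬_{B×B} G^κ(x,y) dx dy ) |c|², where M_B^κ = ∬_{∂B×∂B} H(x,z) ν(x) ν(z)^T dσ(x) dσ(z) ∈ ℂ^{3×3}. Equivalently (integration by parts for the singular part): − ∫_B ( ∇_x ∫_B ∇_x H(x,y)·c dy ) · c dx = c · M_B^κ c. -/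
/-!
The proof uses the divergence theorem twice and never differentiates the kernel twice. Write
`H(x,z) = h(|x − z|)` and `g = c · ν`.

* The vector field `y ↦ H(y,x) c` has bounded divergence `∇_y H(y,x) · c` for `y ≠ x`, and
  `∫_B ∇_y H(y,x) · c dy = ∫_{∂B} H(z,x) g(z) dσ(z)` for *every* `x` (`integral_grad_eq`). The field
  is not `C¹` at `y = x`, so the divergence theorem is applied to `h(√(|y − x|² + ε)) c`, and both
  sides converge as `ε → 0` by dominated convergence.
* As `∇_x H = −∇_y H`, this gives `w(x) = −∫_{∂B} H(x,z) g(z) dσ(z)`. For `x ∈ B` the kernel is smooth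
  near `x` for all `z ∈ ∂B`, so `w` can be differentiated under the integral (`hasFDerivAt_layer`):
  `∇w(x) · c = −∫_{∂B} ∇_x H(x,z) · c g(z) dσ(z)`.
* Integrating over `B`, exchanging the integrals (`∇H` is bounded on bounded sets) and applying the
  first point again, now at `z ∈ ∂B`, yields `−∫_B ∇w · c = ∬ H(x,z) g(x) g(z) = c · M c`.

Neither finiteness of `σb` nor measurability of `ν` is assumed; both follow from the
divergence theorem (`integrable_normal`, `isFiniteMeasure_surface`).
-/

open MeasureTheory Metric Filter Topology NNReal
open scoped Classical

noncomputable section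

/-- The outgoing Helmholtz Green function `G^κ(x,y) = e^{iκ|x−y|}/(4π|x−y|)`. -/
def Gk (κ : ℂ) (x y : EuclideanSpace ℝ (Fin 3)) : ℂ :=
  Complex.exp (Complex.I * κ * (‖x - y‖ : ℝ)) / (4 * Real.pi * (‖x - y‖ : ℝ))

/-- `H(x,z) = G⁰(x,z) − G^κ(x,z) = (1 − e^{iκ|x−z|})/(4π|x−z|)`, extended continuously to the
diagonal by `H(x,x) = −iκ/(4π)`. -/
def Hker (κ : ℂ) (x z : EuclideanSpace ℝ (Fin 3)) : ℂ :=
  if x = z then -Complex.I * κ / (4 * Real.pi)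
  else (1 - Complex.exp (Complex.I * κ * (‖x - z‖ : ℝ))) / (4 * Real.pi * (‖x - z‖ : ℝ))

/-- `(∇ₓ H(x,y))·c` for a real constant vector `c`:
the gradient of the regular part of the kernel paired with `c`. -/
def gradHdotc (κ : ℂ) (c : EuclideanSpace ℝ (Fin 3)) (x y : EuclideanSpace ℝ (Fin 3)) : ℂ :=
  ∑ j : Fin 3,
    ((-1 : ℂ) * (Complex.exp (Complex.I * κ * (‖x - y‖ : ℝ)) * (Complex.I * κ * (‖x - y‖ : ℝ) - 1) + 1)
        / (4 * Real.pi * (‖x - y‖ : ℝ) ^ 3)) * ((x - y) j : ℝ) * (c j : ℝ)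

/-- A bounded open set `B ⊂ ℝ³` has C¹ boundary: near each boundary point, after a rigid
motion, `B` is the subgraph of a C¹ function. -/
def HasC1Boundary (B : Set (EuclideanSpace ℝ (Fin 3))) : Prop :=
  ∀ p ∈ frontier B, ∃ r : ℝ, 0 < r ∧
    ∃ (e : EuclideanSpace ℝ (Fin 3) ≃ₗᵢ[ℝ] EuclideanSpace ℝ (Fin 3)) (φ : ℝ × ℝ → ℝ),
      ContDiff ℝ 1 φ ∧
      ∀ z : EuclideanSpace ℝ (Fin 3), dist z p < r →
        (z ∈ B ↔ e (z - p) 2 < φ (e (z - p) 0, e (z - p) 1))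

/-! ### Radial profile and gradient of the kernel -/

/-- The radial profile `h(s) = (1 − e^{iκs})/(4πs)` of the kernel `H`, with `h(0) = −iκ/(4π)`. -/
def hr (κ : ℂ) (s : ℝ) : ℂ :=
  if s = 0 then -Complex.I * κ / (4 * Real.pi)
  else (1 - Complex.exp (Complex.I * κ * s)) / (4 * Real.pi * s)

/-- The derivative `h'(s)` of the radial profile for `s ≠ 0` (its value at `s = 0` is junk). -/
def hd (κ : ℂ) (s : ℝ) : ℂ :=
  -(Complex.exp (Complex.I * κ * s) * (Complex.I * κ * s - 1) + 1) / (4 * Real.pi * s ^ 2)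

/-- The real-linear form `u ↦ h'(s) ⟪v, u⟫ / s`. With `v = y - x` and `s = ‖y - x‖` it is the
derivative of `H(·, x)` at `y`; with `s = √(‖y - x‖² + ε)` it is that of the regularized kernel.
It vanishes for `v = 0`. -/
def Gfd (κ : ℂ) (s : ℝ) (v : EuclideanSpace ℝ (Fin 3)) : EuclideanSpace ℝ (Fin 3) →L[ℝ] ℂ :=
  (hd κ s / s) • (Complex.ofRealCLM ∘L innerSL ℝ v)

lemma hr_eq (κ : ℂ) {s : ℝ} (hs : s ≠ 0) :
    hr κ s = (1 - Complex.exp (Complex.I * κ * s)) / (4 * Real.pi * s) := by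
  simp [hr, hs]

lemma continuous_hr (κ : ℂ) : Continuous (hr κ) := by
  set f : ℝ → ℂ := fun s => (1 - Complex.exp (Complex.I * κ * s)) / (4 * Real.pi) with hf
  have hder : ∀ s : ℝ, HasDerivAt f
      (-(Complex.exp (Complex.I * κ * s) * (Complex.I * κ)) / (4 * Real.pi)) s := by
    intro s
    have h1 : HasDerivAt (fun s : ℝ => Complex.I * κ * (s : ℂ)) (Complex.I * κ) s := by
      simpa using (Complex.ofRealCLM.hasDerivAt (x := s)).const_mul (Complex.I * κ)
    exact ((h1.cexp.const_sub 1).div_const _)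
  -- the profile is a difference quotient at `0`, hence continuous by differentiability there
  have heq : hr κ = dslope f 0 := by
    funext s
    by_cases hs : s = 0
    · subst hs
      rw [dslope_same, (hder 0).deriv]
      simp [hr]
    · rw [dslope_of_ne _ hs, hr_eq κ hs, slope_def_module]
      simp only [hf, sub_zero, Complex.ofReal_zero, mul_zero, Complex.exp_zero, sub_self, zero_div,
        Complex.real_smul, Complex.ofReal_inv]
      have : (s : ℂ) ≠ 0 := by exact_mod_cast hs
      have : (Real.pi : ℂ) ≠ 0 := by exact_mod_cast Real.pi_ne_zero
      field_simp
  rw [heq, continuous_iff_continuousAt]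
  intro s
  by_cases hs : s = 0
  · subst hs
    exact continuousAt_dslope_same.2 (hder 0).differentiableAt
  · exact (continuousAt_dslope_of_ne hs).2 (hder s).continuousAt

lemma hasDerivAt_hr (κ : ℂ) {s : ℝ} (hs : s ≠ 0) : HasDerivAt (hr κ) (hd κ s) s := by
  have hs' : (s : ℂ) ≠ 0 := by exact_mod_cast hs
  have hpi : (Real.pi : ℂ) ≠ 0 := by exact_mod_cast Real.pi_ne_zero
  have h1 : HasDerivAt (fun s : ℝ => Complex.I * κ * (s : ℂ)) (Complex.I * κ) s := by
    simpa using (Complex.ofRealCLM.hasDerivAt (x := s)).const_mul (Complex.I * κ)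
  have h2 : HasDerivAt (fun s : ℝ => 4 * (Real.pi : ℂ) * (s : ℂ)) (4 * Real.pi) s := by
    simpa using (Complex.ofRealCLM.hasDerivAt (x := s)).const_mul (4 * (Real.pi : ℂ))
  have h3 := (h1.cexp.const_sub 1).div h2 (by simp [hs', hpi])
  have h4 : HasDerivAt (fun s : ℝ => (1 - Complex.exp (Complex.I * κ * s)) / (4 * Real.pi * s))
      (hd κ s) s := by
    refine h3.congr_deriv ?_
    unfold hd
    field_simp
    ring
  refine h4.congr_of_eventuallyEq ?_
  filter_upwards [isOpen_ne.mem_nhds hs] with t ht using hr_eq κ ht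

lemma norm_hd_le (κ : ℂ) {s : ℝ} (hs : 0 ≤ s) :
    ‖hd κ s‖ ≤ ‖κ‖ ^ 2 * Real.exp (‖κ‖ * s) := by
  rcases hs.eq_or_lt with rfl | hs
  · simp [hd]
  set z : ℂ := Complex.I * κ * s with hz
  have hzn : ‖z‖ = ‖κ‖ * s := by simp [hz, abs_of_pos hs]
  have e1 := Complex.norm_exp_sub_sum_le_norm_mul_exp z 1
  have e2 := Complex.norm_exp_sub_sum_le_norm_mul_exp z 2
  simp [Finset.sum_range_succ] at e1 e2
  have key : ‖-(Complex.exp z * (z - 1) + 1)‖ ≤ 2 * (‖z‖ ^ 2 * Real.exp ‖z‖) := by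
    have : -(Complex.exp z * (z - 1) + 1)
        = (Complex.exp z - (1 + z)) - z * (Complex.exp z - 1) := by ring
    rw [this]
    calc _ ≤ ‖Complex.exp z - (1 + z)‖ + ‖z * (Complex.exp z - 1)‖ := norm_sub_le _ _
      _ ≤ ‖z‖ ^ 2 * Real.exp ‖z‖ + ‖z‖ * (‖z‖ * Real.exp ‖z‖) := by
        rw [norm_mul]; gcongr
      _ = _ := by ring
  have hden : ‖(4 * Real.pi * (s : ℂ) ^ 2 : ℂ)‖ = 4 * Real.pi * s ^ 2 := by
    simp [abs_of_pos Real.pi_pos]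
  unfold hd
  rw [norm_div, hden, div_le_iff₀ (by positivity)]
  refine key.trans ?_
  rw [hzn]
  have : 0 ≤ (‖κ‖ * s) ^ 2 * Real.exp (‖κ‖ * s) := by positivity
  nlinarith [Real.pi_gt_three]

lemma norm_Gfd_le (κ : ℂ) {s R : ℝ} {v : EuclideanSpace ℝ (Fin 3)} (hs : ‖v‖ ≤ s) (hR : s ≤ R) :
    ‖Gfd κ s v‖ ≤ ‖κ‖ ^ 2 * Real.exp (‖κ‖ * R) := by
  have hs0 : 0 ≤ s := (norm_nonneg _).trans hs
  refine le_trans ?_ ((norm_hd_le κ hs0).trans (by gcongr))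
  have h1 : ‖Complex.ofRealCLM ∘L innerSL ℝ v‖ ≤ ‖v‖ := by
    refine (ContinuousLinearMap.opNorm_comp_le _ _).trans ?_
    simp
  unfold Gfd
  rw [norm_smul, norm_div, Complex.norm_real, Real.norm_of_nonneg hs0]
  rcases hs0.eq_or_lt with rfl | hpos
  · simp
  calc ‖hd κ s‖ / s * ‖Complex.ofRealCLM ∘L innerSL ℝ v‖ ≤ ‖hd κ s‖ / s * s := by
        gcongr; exact h1.trans hs
    _ = ‖hd κ s‖ := by field_simp

lemma Gfd_apply (κ : ℂ) (s : ℝ) (v u : EuclideanSpace ℝ (Fin 3)) :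
    Gfd κ s v u = hd κ s / s * (∑ j, (v j : ℂ) * (u j : ℂ)) := by
  simp [Gfd, PiLp.inner_apply, mul_comm]

lemma gradHdotc_eq (κ : ℂ) (c x y : EuclideanSpace ℝ (Fin 3)) :
    gradHdotc κ c x y = Gfd κ ‖x - y‖ (x - y) c := by
  rw [Gfd_apply, gradHdotc, Finset.mul_sum]
  refine Finset.sum_congr rfl fun j _ => ?_
  unfold hd
  rw [div_div, neg_one_mul, mul_assoc (4 * (Real.pi : ℂ)), ← pow_succ]
  ring

lemma gradHdotc_swap (κ : ℂ) (c x y : EuclideanSpace ℝ (Fin 3)) :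
    gradHdotc κ c x y = - gradHdotc κ c y x := by
  rw [gradHdotc_eq, gradHdotc_eq, norm_sub_rev, Gfd_apply, Gfd_apply, ← mul_neg,
    ← Finset.sum_neg_distrib]
  congr 1
  refine Finset.sum_congr rfl fun j _ => ?_
  simp
  ring

lemma Hker_eq (κ : ℂ) (x z : EuclideanSpace ℝ (Fin 3)) : Hker κ x z = hr κ ‖x - z‖ := by
  unfold Hker hr
  simp only [norm_eq_zero, sub_eq_zero]

lemma Hker_comm (κ : ℂ) (x z : EuclideanSpace ℝ (Fin 3)) : Hker κ x z = Hker κ z x := by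
  rw [Hker_eq, Hker_eq, norm_sub_rev]

lemma continuous_Hker (κ : ℂ) :
    Continuous fun p : EuclideanSpace ℝ (Fin 3) × EuclideanSpace ℝ (Fin 3) => Hker κ p.1 p.2 := by
  simp only [Hker_eq]
  exact (continuous_hr κ).comp (by fun_prop)

lemma measurable_hd (κ : ℂ) : Measurable (hd κ) := by
  unfold hd
  fun_prop

lemma measurable_gradHdotc (κ : ℂ) (c : EuclideanSpace ℝ (Fin 3)) :
    Measurable fun p : EuclideanSpace ℝ (Fin 3) × EuclideanSpace ℝ (Fin 3) =>
      gradHdotc κ c p.1 p.2 := by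
  unfold gradHdotc
  fun_prop

lemma stronglyMeasurable_Gfd (κ : ℂ) (x : EuclideanSpace ℝ (Fin 3)) :
    StronglyMeasurable fun z : EuclideanSpace ℝ (Fin 3) => Gfd κ ‖x - z‖ (x - z) := by
  have h := measurable_hd κ
  have h1 : StronglyMeasurable fun z : EuclideanSpace ℝ (Fin 3) =>
      hd κ ‖x - z‖ / ((‖x - z‖ : ℝ) : ℂ) := Measurable.stronglyMeasurable (by fun_prop)
  have h2 : StronglyMeasurable fun z : EuclideanSpace ℝ (Fin 3) =>
      Complex.ofRealCLM ∘L innerSL ℝ (x - z) := Continuous.stronglyMeasurable (by fun_prop)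
  exact h1.smul h2

/-- Derivative of the kernel (`ε = 0`) and of its regularization (`ε > 0`). -/
lemma hasFDerivAt_hr_reg (κ : ℂ) (x y : EuclideanSpace ℝ (Fin 3)) {ε : ℝ}
    (hpos : 0 < ‖y - x‖ ^ 2 + ε) :
    HasFDerivAt (fun y => hr κ √(‖y - x‖ ^ 2 + ε)) (Gfd κ √(‖y - x‖ ^ 2 + ε) (y - x)) y := by
  have h1 := (((hasFDerivAt_id y).sub_const x).norm_sq.add_const ε).sqrt hpos.ne'
  have h2 := (hasDerivAt_hr κ (Real.sqrt_ne_zero'.2 hpos)).hasFDerivAt.comp y h1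
  refine h2.congr_fderiv ?_
  ext u
  simp [Gfd]
  field_simp

lemma hasFDerivAt_Hker (κ : ℂ) {x y : EuclideanSpace ℝ (Fin 3)} (h : y ≠ x) :
    HasFDerivAt (fun y => Hker κ y x) (Gfd κ ‖y - x‖ (y - x)) y := by
  have hp : 0 < ‖y - x‖ ^ 2 + 0 := by
    have : 0 < ‖y - x‖ := norm_pos_iff.2 (sub_ne_zero.2 h)
    positivity
  have := hasFDerivAt_hr_reg κ x y hp
  simpa [Hker_eq] using this

lemma contDiff_hr_reg (κ : ℂ) (x : EuclideanSpace ℝ (Fin 3)) {ε : ℝ} (hε : 0 < ε) :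
    ContDiff ℝ 1 (fun y => hr κ √(‖y - x‖ ^ 2 + ε)) := by
  have hpos : ∀ y : EuclideanSpace ℝ (Fin 3), 0 < ‖y - x‖ ^ 2 + ε := fun y => by positivity
  have hs : ContDiff ℝ 1 (fun y : EuclideanSpace ℝ (Fin 3) => √(‖y - x‖ ^ 2 + ε)) :=
    (((contDiff_id.sub contDiff_const).norm_sq ℝ).add contDiff_const).sqrt fun y => (hpos y).ne'
  have hsc : ContDiff ℝ 1
      (fun y : EuclideanSpace ℝ (Fin 3) => ((√(‖y - x‖ ^ 2 + ε) : ℝ) : ℂ)) :=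
    Complex.ofRealCLM.contDiff.comp hs
  have heq : (fun y => hr κ √(‖y - x‖ ^ 2 + ε)) = fun y =>
      (1 - Complex.exp (Complex.I * κ * (√(‖y - x‖ ^ 2 + ε) : ℝ)))
        / (4 * Real.pi * (√(‖y - x‖ ^ 2 + ε) : ℝ)) :=
    funext fun y => hr_eq κ (Real.sqrt_ne_zero'.2 (hpos y))
  simp only [heq, div_eq_mul_inv]
  refine (contDiff_const.sub (contDiff_const.mul hsc).cexp).mul
    ((contDiff_const.mul hsc).inv fun y => ?_)
  have h1 : ((√(‖y - x‖ ^ 2 + ε) : ℝ) : ℂ) ≠ 0 := by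
    exact_mod_cast Real.sqrt_ne_zero'.2 (hpos y)
  have hpi : (Real.pi : ℂ) ≠ 0 := by exact_mod_cast Real.pi_ne_zero
  simp [h1, hpi]

/-! ### Divergence theorem and layer potential -/

section Boundary

variable {B : Set (EuclideanSpace ℝ (Fin 3))} {σb : Measure (EuclideanSpace ℝ (Fin 3))}
  {ν : EuclideanSpace ℝ (Fin 3) → EuclideanSpace ℝ (Fin 3)}

/-- The divergence theorem already forces the components of `ν` to be integrable: for
`F = (x_i + t) e_i` the volume side is `|B| ≠ 0`, so the surface integral cannot be a junk zero;
subtracting the cases `t = 0` and `t = 1` leaves `ν_i`. -/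
lemma integrable_normal (hBopen : IsOpen B) (hBbdd : Bornology.IsBounded B)
    (hσb_supp : σb ((frontier B)ᶜ) = 0)
    (hdivergence : ∀ F : EuclideanSpace ℝ (Fin 3) → Fin 3 → ℂ,
      (∃ U, IsOpen U ∧ closure B ⊆ U ∧ ContDiffOn ℝ 1 F U) →
      (∫ x in B, ∑ i : Fin 3, fderiv ℝ F x (EuclideanSpace.single i 1) i)
        = ∫ x, ∑ i : Fin 3, F x i * (ν x i : ℝ) ∂σb) (i : Fin 3) :
    Integrable (fun z => ((ν z i : ℝ) : ℂ)) σb := by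
  rcases B.eq_empty_or_nonempty with rfl | hne
  · have : σb = 0 := by simpa using hσb_supp
    simp [this]
  have hvol : (volume B).toReal ≠ 0 :=
    (ENNReal.toReal_pos (hBopen.measure_pos volume hne).ne' hBbdd.measure_lt_top.ne).ne'
  have main : ∀ t : ℝ, Integrable (fun z => ((z i + t : ℝ) : ℂ) * ((ν z i : ℝ) : ℂ)) σb := by
    intro t
    by_contra hcon
    set L : EuclideanSpace ℝ (Fin 3) →L[ℝ] ℂ :=
      Complex.ofRealCLM ∘L (EuclideanSpace.proj i : EuclideanSpace ℝ (Fin 3) →L[ℝ] ℝ) with hL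
    set F : EuclideanSpace ℝ (Fin 3) → Fin 3 → ℂ :=
      fun z j => if j = i then L z + (t : ℂ) else 0 with hF
    have hFd : ∀ z, HasFDerivAt F
        (ContinuousLinearMap.pi fun j => if j = i then L else 0) z := by
      intro z
      refine hasFDerivAt_pi.2 fun j => ?_
      by_cases hj : j = i
      · simpa [hj] using L.hasFDerivAt.add_const (t : ℂ)
      · simpa [hj] using hasFDerivAt_const (0 : ℂ) z
    have hFc : ContDiff ℝ 1 F := by
      refine contDiff_pi.2 fun j => ?_
      by_cases hj : j = i
      · simpa [hF, hj] using L.contDiff.add contDiff_const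
      · simpa [hF, hj] using contDiff_const
    have h := hdivergence F ⟨Set.univ, isOpen_univ, Set.subset_univ _, hFc.contDiffOn⟩
    have hl : ∀ x, ∑ j : Fin 3, fderiv ℝ F x (EuclideanSpace.single j 1) j = 1 := by
      intro x
      rw [(hFd x).fderiv, Finset.sum_eq_single i]
      · simp [hL]
      · intro j _ hj
        simp [hj]
      · simp
    have hr' : ∀ x, ∑ j : Fin 3, F x j * (ν x j : ℝ)
        = ((x i + t : ℝ) : ℂ) * ((ν x i : ℝ) : ℂ) := by
      intro x
      rw [Finset.sum_eq_single i]
      · simp [hF, hL]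
      · intro j _ hj
        simp [hF, hj]
      · simp
    simp only [hl, hr', integral_undef hcon] at h
    simp [Measure.real] at h
    exact hvol (by simpa [ENNReal.toReal_eq_zero_iff] using h)
  refine ((main 1).sub (main 0)).congr (ae_of_all _ fun z => ?_)
  simp
  ring

/-- A unit normal with integrable components makes the surface measure finite. -/
lemma isFiniteMeasure_surface (hσb_supp : σb ((frontier B)ᶜ) = 0)
    (hν_unit : ∀ y ∈ frontier B, ‖ν y‖ = 1)
    (hνint : ∀ i, Integrable (fun z => ((ν z i : ℝ) : ℂ)) σb) : IsFiniteMeasure σb := by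
  have hsum : Integrable (fun z => ∑ i, ‖((ν z i : ℝ) : ℂ)‖) σb :=
    integrable_finsetSum _ fun i _ => (hνint i).norm
  have h1 : Integrable (fun _ => (1 : ℝ)) σb := by
    refine hsum.mono' aestronglyMeasurable_const ?_
    filter_upwards [show ∀ᵐ z ∂σb, z ∈ frontier B from hσb_supp] with z hz
    have h2 : ∑ i, (ν z i) ^ 2 = 1 := by
      rw [← EuclideanSpace.real_norm_sq_eq, hν_unit z hz, one_pow]
    simp only [Complex.norm_real, Real.norm_eq_abs, abs_one]
    by_contra hlt
    push Not at hlt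
    have h3 : ∑ i, (ν z i) ^ 2 ≤ (∑ i, |ν z i|) ^ 2 := by
      simpa using Finset.sum_sq_le_sq_sum_of_nonneg (s := Finset.univ) (f := fun i => |ν z i|)
        (fun i _ => abs_nonneg _)
    have h4 : 0 ≤ ∑ i, |ν z i| := Finset.sum_nonneg fun i _ => abs_nonneg _
    nlinarith
  simpa using integrable_const_iff.1 h1

/-- The divergence theorem for `y ↦ H(y,x) c`, valid for every `x` although this field is not `C¹`
at `y = x`: replace `|y − x|` by `√(|y − x|² + ε)` and let `ε → 0`. -/
lemma integral_grad_eq (hBopen : IsOpen B) (hBbdd : Bornology.IsBounded B)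
    (hσb_supp : σb ((frontier B)ᶜ) = 0)
    (hdivergence : ∀ F : EuclideanSpace ℝ (Fin 3) → Fin 3 → ℂ,
      (∃ U, IsOpen U ∧ closure B ⊆ U ∧ ContDiffOn ℝ 1 F U) →
      (∫ x in B, ∑ i : Fin 3, fderiv ℝ F x (EuclideanSpace.single i 1) i)
        = ∫ x, ∑ i : Fin 3, F x i * (ν x i : ℝ) ∂σb)
    (hνint : ∀ i, Integrable (fun z => ((ν z i : ℝ) : ℂ)) σb)
    (κ : ℂ) (c x : EuclideanSpace ℝ (Fin 3)) :
    ∫ y in B, gradHdotc κ c y x = ∫ z, Hker κ z x * ∑ j, (c j : ℂ) * (ν z j : ℂ) ∂σb := by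
  set g : EuclideanSpace ℝ (Fin 3) → ℂ := fun z => ∑ j, (c j : ℂ) * (ν z j : ℂ) with hg
  have hgint : Integrable g σb := integrable_finsetSum _ fun j _ => (hνint j).const_mul _
  set ε : ℕ → ℝ := fun n => 1 / ((n : ℝ) + 1) with hε
  have hεpos : ∀ n, 0 < ε n := fun n => by positivity
  have hεle : ∀ n, ε n ≤ 1 := fun n => by
    rw [hε]; exact (div_le_one (by positivity)).2 (by simp)
  have hεlim : Tendsto ε atTop (𝓝 0) := tendsto_one_div_add_atTop_nhds_zero_nat
  set s : ℕ → EuclideanSpace ℝ (Fin 3) → ℝ := fun n y => √(‖y - x‖ ^ 2 + ε n) with hs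
  have hscont : ∀ n, Continuous (s n) := fun n => by fun_prop
  have hslim : ∀ y, Tendsto (fun n => s n y) atTop (𝓝 ‖y - x‖) := by
    intro y
    have := (hεlim.const_add (‖y - x‖ ^ 2)).sqrt
    simpa using this
  have hsge : ∀ n y, ‖y - x‖ ≤ s n y := fun n y =>
    Real.le_sqrt_of_sq_le (by linarith [hεpos n])
  have hsle : ∀ n y, s n y ≤ ‖y - x‖ + 1 := fun n y => by
    refine Real.sqrt_le_iff.2 ⟨by positivity, ?_⟩
    nlinarith [hεle n, norm_nonneg (y - x)]
  obtain ⟨R, hR⟩ := hBbdd.closure.subset_closedBall x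
  have hRle : ∀ y ∈ closure B, ‖y - x‖ ≤ R := fun y hy => by
    simpa [dist_eq_norm] using hR hy
  have hfin : IsFiniteMeasure (volume.restrict B) :=
    isFiniteMeasure_restrict.2 hBbdd.measure_lt_top.ne
  have hsB : ∀ᵐ z ∂σb, z ∈ closure B := by
    filter_upwards [show ∀ᵐ z ∂σb, z ∈ frontier B from hσb_supp] with z hz
      using frontier_subset_closure hz
  have hn : ∀ n, ∫ y in B, Gfd κ (s n y) (y - x) c = ∫ z, hr κ (s n z) * g z ∂σb := by
    intro n
    set F : EuclideanSpace ℝ (Fin 3) → Fin 3 → ℂ := fun y j => hr κ (s n y) * (c j : ℂ) with hF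
    have hFd : ∀ y, HasFDerivAt F
        (ContinuousLinearMap.pi fun j => (c j : ℂ) • Gfd κ (s n y) (y - x)) y := fun y =>
      hasFDerivAt_pi.2 fun j =>
        (hasFDerivAt_hr_reg κ x y (by have := hεpos n; positivity)).mul_const (c j : ℂ)
    have hFc : ContDiff ℝ 1 F :=
      contDiff_pi.2 fun j => (contDiff_hr_reg κ x (hεpos n)).mul contDiff_const
    have h := hdivergence F ⟨Set.univ, isOpen_univ, Set.subset_univ _, hFc.contDiffOn⟩
    refine Eq.trans (integral_congr_ae (ae_of_all _ fun y => ?_)) (h.trans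
      (integral_congr_ae (ae_of_all _ fun z => ?_)))
    · simp only [(hFd y).fderiv, Gfd_apply, Finset.mul_sum, ContinuousLinearMap.coe_pi',
        smul_apply, smul_eq_mul]
      refine Finset.sum_congr rfl fun j _ => ?_
      rw [Finset.sum_eq_single j]
      · simp; ring
      · intro k _ hk
        simp [hk]
      · simp
    · simp only [hF, hg, Finset.mul_sum]
      refine Finset.sum_congr rfl fun j _ => by ring
  have hleft : Tendsto (fun n => ∫ y in B, Gfd κ (s n y) (y - x) c) atTop
      (𝓝 (∫ y in B, gradHdotc κ c y x)) := by
    refine tendsto_integral_of_dominated_convergence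
      (fun _ => ‖κ‖ ^ 2 * Real.exp (‖κ‖ * (R + 1)) * ‖c‖) (fun n => ?_) (integrable_const _)
      (fun n => ?_) (ae_of_all _ fun y => ?_)
    · simp only [Gfd_apply]
      have h1 := measurable_hd κ
      have h2 := (hscont n).measurable
      exact Measurable.aestronglyMeasurable (by fun_prop)
    · filter_upwards [ae_restrict_mem hBopen.measurableSet] with y hy
      refine (ContinuousLinearMap.le_opNorm _ _).trans ?_
      gcongr
      exact norm_Gfd_le κ (hsge n y)
        ((hsle n y).trans (by linarith [hRle y (subset_closure hy)]))
    · rw [gradHdotc_eq]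
      by_cases hyx : y = x
      · simp [hyx, Gfd_apply]
      · have hne : ‖y - x‖ ≠ 0 := norm_ne_zero_iff.2 (sub_ne_zero.2 hyx)
        have hne' : ((‖y - x‖ : ℝ) : ℂ) ≠ 0 := by exact_mod_cast hne
        have hpi : (Real.pi : ℂ) ≠ 0 := by exact_mod_cast Real.pi_ne_zero
        have hc : ContinuousAt (fun r : ℝ => hd κ r / r) ‖y - x‖ := by
          unfold hd
          have : (4 * (Real.pi : ℂ) * ((‖y - x‖ : ℝ) : ℂ) ^ 2) ≠ 0 := by simp [hne', hpi]
          fun_prop (disch := assumption)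
        simp only [Gfd_apply]
        exact (hc.tendsto.comp (hslim y)).mul_const _
  have hright : Tendsto (fun n => ∫ z, hr κ (s n z) * g z ∂σb) atTop
      (𝓝 (∫ z, Hker κ z x * g z ∂σb)) := by
    obtain ⟨C, hC⟩ := (isCompact_Icc (a := (0 : ℝ)) (b := R + 1)).exists_bound_of_continuousOn
      (continuous_hr κ).continuousOn
    refine tendsto_integral_of_dominated_convergence
      (fun z => C * ‖g z‖) (fun n => ?_) (hgint.norm.const_mul C)
      (fun n => ?_) (ae_of_all _ fun z => ?_)
    · exact ((continuous_hr κ).comp (hscont n)).aestronglyMeasurable.mul hgint.1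
    · filter_upwards [hsB] with z hz
      rw [norm_mul]
      gcongr
      exact hC _ ⟨Real.sqrt_nonneg _, (hsle n z).trans (by linarith [hRle z hz])⟩
    · rw [Hker_eq]
      exact (((continuous_hr κ).tendsto _).comp (hslim z)).mul_const _
  simp only [hn] at hleft
  exact tendsto_nhds_unique hleft hright

/-- The single-layer potential with density `g` is differentiable in `B`, by
differentiation under the integral sign: the kernel is smooth for `z ∈ ∂B` and `x ∈ B`. -/
lemma hasFDerivAt_layer (hBopen : IsOpen B) (hBbdd : Bornology.IsBounded B)
    (hσb_supp : σb ((frontier B)ᶜ) = 0) (κ : ℂ) {g : EuclideanSpace ℝ (Fin 3) → ℂ}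
    (hgint : Integrable g σb) {x : EuclideanSpace ℝ (Fin 3)} (hx : x ∈ B) :
    HasFDerivAt (fun x => ∫ z, g z * Hker κ x z ∂σb)
      (∫ z, g z • Gfd κ ‖x - z‖ (x - z) ∂σb) x := by
  have hfr : ∀ᵐ z ∂σb, z ∈ frontier B := hσb_supp
  obtain ⟨R, hR⟩ := Metric.isBounded_iff.1 hBbdd.closure
  obtain ⟨C, hC⟩ := (hBbdd.isCompact_closure.prod hBbdd.isCompact_closure).exists_bound_of_continuousOn
    (continuous_Hker κ).continuousOn
  have hmeas : ∀ x, AEStronglyMeasurable (fun z => Hker κ x z) σb := fun x =>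
    ((continuous_Hker κ).comp (Continuous.prodMk_right x)).aestronglyMeasurable
  refine hasFDerivAt_integral_of_dominated_of_fderiv_le (s := B)
    (F' := fun x z => g z • Gfd κ ‖x - z‖ (x - z))
    (bound := fun z => ‖g z‖ * (‖κ‖ ^ 2 * Real.exp (‖κ‖ * R))) (hBopen.mem_nhds hx)
    (Eventually.of_forall fun x => hgint.1.mul (hmeas x)) ?_ ?_ ?_ (hgint.norm.mul_const _) ?_
  · refine hgint.mul_bdd (c := C) (hmeas x) ?_
    filter_upwards [hfr] with z hz
    exact hC (x, z) ⟨subset_closure hx, frontier_subset_closure hz⟩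
  · exact hgint.1.smul (stronglyMeasurable_Gfd κ x).aestronglyMeasurable
  · filter_upwards [hfr] with z hz y hy
    rw [norm_smul]
    gcongr
    refine norm_Gfd_le κ le_rfl ?_
    rw [← dist_eq_norm]
    exact hR (subset_closure hy) (frontier_subset_closure hz)
  · filter_upwards [hfr] with z hz y hy
    have hyz : y ≠ z := by
      rintro rfl
      exact (hBopen.frontier_eq ▸ hz).2 hy
    exact (hasFDerivAt_Hker κ hyz).const_mul (g z)

end Boundary

/-! ### The quadratic form on constant fields -/

/-- **The perturbative matrix `M_B^κ` for constant fields.**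
For a bounded open `B ⊂ ℝ³` with C¹ boundary (surface measure `σb`, outward unit normal `ν`,
divergence theorem) and `Im κ ≥ 0`, for every constant vector `c`:
`⟨(T_B⁰ − T_B^κ)[c], c⟩_{L²(B,ℂ³)} = c·M_B^κ c − κ² (∬_{B×B} G^κ) |c|²`, with
`M_B^κ = ∬_{∂B×∂B} H(x,z) ν(x)ν(z)^T dσ(x)dσ(z)`; equivalently (integration by parts of the
singular part), `−∫_B (∇ₓ ∫_B ∇ₓH(x,y)·c dy)·c dx = c·M_B^κ c`, where the function
`w(x) = ∫_B ∇ₓH(x,y)·c dy` is differentiable on `B`. -/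
theorem perturbative_matrix_constant_fields
    (B : Set (EuclideanSpace ℝ (Fin 3))) (hBopen : IsOpen B) (hBbdd : Bornology.IsBounded B)
    (hBreg : HasC1Boundary B)
    -- surface measure and outward unit normal
    (σb : Measure (EuclideanSpace ℝ (Fin 3)))
    (ν : EuclideanSpace ℝ (Fin 3) → EuclideanSpace ℝ (Fin 3))
    (hσb_supp : σb ((frontier B)ᶜ) = 0)
    (hν_unit : ∀ y ∈ frontier B, ‖ν y‖ = 1)
    (hdivergence : ∀ F : EuclideanSpace ℝ (Fin 3) → Fin 3 → ℂ,
      (∃ U, IsOpen U ∧ closure B ⊆ U ∧ ContDiffOn ℝ 1 F U) →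
      (∫ x in B, ∑ i : Fin 3, fderiv ℝ F x (EuclideanSpace.single i 1) i)
        = ∫ x, ∑ i : Fin 3, F x i * (ν x i : ℝ) ∂σb)
    (κ : ℂ) (hκ : 0 ≤ κ.im)
    -- the perturbative matrix M_B^κ
    (M : Matrix (Fin 3) (Fin 3) ℂ)
    (hM : M = fun i j => ∫ x, (∫ z, Hker κ x z * (ν x i : ℝ) * (ν z j : ℝ) ∂σb) ∂σb)
    -- w c = x ↦ ∫_B ∇ₓH(x,y)·c dy
    (w : EuclideanSpace ℝ (Fin 3) → EuclideanSpace ℝ (Fin 3) → ℂ)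
    (hw : w = fun c x => ∫ y in B, gradHdotc κ c x y) :
    ∀ c : EuclideanSpace ℝ (Fin 3),
      (∀ x ∈ B, DifferentiableAt ℝ (w c) x) ∧
      -- ⟨(T⁰ − T^κ)[c], c⟩ = c·Mc − κ² (∬ G^κ) |c|²
      ((∫ x in B, (-(∑ j : Fin 3, fderiv ℝ (w c) x (EuclideanSpace.single j 1) * (c j : ℝ))))
          - κ ^ 2 * (∫ x in B, ∫ y in B, Gk κ x y) * ((‖c‖ : ℝ) : ℂ) ^ 2
        = (∑ i : Fin 3, ∑ j : Fin 3, (c i : ℝ) * M i j * (c j : ℝ))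
          - κ ^ 2 * (∫ x in B, ∫ y in B, Gk κ x y) * ((‖c‖ : ℝ) : ℂ) ^ 2) ∧
      -- equivalently, integration by parts of the singular part:
      (-(∫ x in B, ∑ j : Fin 3, fderiv ℝ (w c) x (EuclideanSpace.single j 1) * (c j : ℝ))
        = ∑ i : Fin 3, ∑ j : Fin 3, (c i : ℝ) * M i j * (c j : ℝ)) := by
  intro c
  have hνint := integrable_normal hBopen hBbdd hσb_supp hdivergence
  have hσfin := isFiniteMeasure_surface hσb_supp hν_unit hνint
  have hfin : IsFiniteMeasure (volume.restrict B) :=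
    isFiniteMeasure_restrict.2 hBbdd.measure_lt_top.ne
  have hfr : ∀ᵐ z ∂σb, z ∈ frontier B := hσb_supp
  set g : EuclideanSpace ℝ (Fin 3) → ℂ := fun z => ∑ j, (c j : ℂ) * (ν z j : ℂ) with hg
  have hgint : Integrable g σb := integrable_finsetSum _ fun j _ => (hνint j).const_mul _
  have hgrad : ∀ x, ∫ y in B, gradHdotc κ c y x = ∫ z, Hker κ z x * g z ∂σb :=
    integral_grad_eq hBopen hBbdd hσb_supp hdivergence hνint κ c
  have hwc : w c = fun x => -∫ z, g z * Hker κ x z ∂σb := by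
    funext x
    simp only [hw]
    simp only [gradHdotc_swap κ c x, integral_neg, hgrad]
    congr 1
    exact integral_congr_ae (ae_of_all _ fun z => by simp only [Hker_comm κ z x, mul_comm])
  have hwd : ∀ x ∈ B, HasFDerivAt (w c) (-∫ z, g z • Gfd κ ‖x - z‖ (x - z) ∂σb) x := by
    intro x hx
    rw [hwc]
    exact (hasFDerivAt_layer hBopen hBbdd hσb_supp κ hgint hx).neg
  obtain ⟨R, hR⟩ := Metric.isBounded_iff.1 hBbdd.closure
  have hbd : ∀ x ∈ B, ∀ z ∈ frontier B,
      ‖Gfd κ ‖x - z‖ (x - z)‖ ≤ ‖κ‖ ^ 2 * Real.exp (‖κ‖ * R) := by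
    intro x hx z hz
    refine norm_Gfd_le κ le_rfl ?_
    rw [← dist_eq_norm]
    exact hR (subset_closure hx) (frontier_subset_closure hz)
  have hdirect : ∀ x ∈ B, ∑ j : Fin 3, fderiv ℝ (w c) x (EuclideanSpace.single j 1) * (c j : ℝ)
      = -∫ z, g z * gradHdotc κ c x z ∂σb := by
    intro x hx
    have hsum : ∑ j : Fin 3, fderiv ℝ (w c) x (EuclideanSpace.single j 1) * (c j : ℝ)
        = fderiv ℝ (w c) x c := by
      have hc : c = ∑ j, (c j) • (EuclideanSpace.single j 1 : EuclideanSpace ℝ (Fin 3)) := by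
        ext k
        fin_cases k <;> simp [Fin.sum_univ_three]
      generalize fderiv ℝ (w c) x = L
      conv_rhs => rw [hc]
      rw [map_sum]
      refine Finset.sum_congr rfl fun j _ => ?_
      rw [map_smul, Complex.real_smul, mul_comm]
    rw [hsum, (hwd x hx).fderiv]
    have hI : Integrable (fun z => g z • Gfd κ ‖x - z‖ (x - z)) σb := by
      refine (hgint.norm.mul_const (‖κ‖ ^ 2 * Real.exp (‖κ‖ * R))).mono'
        (hgint.1.smul (stronglyMeasurable_Gfd κ x).aestronglyMeasurable) ?_
      filter_upwards [hfr] with z hz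
      rw [norm_smul]
      gcongr
      exact hbd x hx z hz
    rw [neg_apply, ContinuousLinearMap.integral_apply hI]
    simp only [smul_apply, smul_eq_mul, gradHdotc_eq]
  have hswap : ∫ x in B, ∫ z, g z * gradHdotc κ c x z ∂σb
      = ∫ z, (∫ x in B, g z * gradHdotc κ c x z) ∂σb := by
    refine integral_integral_swap ?_
    refine (hgint.comp_snd (volume.restrict B)).mul_bdd
      (c := ‖κ‖ ^ 2 * Real.exp (‖κ‖ * R) * ‖c‖)
      (measurable_gradHdotc κ c).aestronglyMeasurable ?_
    filter_upwards [Measure.quasiMeasurePreserving_fst.ae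
        (ae_restrict_mem (μ := volume) hBopen.measurableSet),
      Measure.quasiMeasurePreserving_snd.ae hfr] with p hp1 hp2
    rw [gradHdotc_eq]
    refine (ContinuousLinearMap.le_opNorm _ _).trans ?_
    gcongr
    exact hbd _ hp1 _ hp2
  have hlhs : ∫ x in B, ∑ j : Fin 3,
      fderiv ℝ (w c) x (EuclideanSpace.single j 1) * (c j : ℝ)
      = -∫ z, g z * ∫ x, Hker κ x z * g x ∂σb ∂σb := by
    rw [setIntegral_congr_fun hBopen.measurableSet hdirect, integral_neg, hswap]
    simp only [integral_const_mul, hgrad]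
  -- the quadratic form of `M` is the double layer integral, by linearity
  obtain ⟨C, hC⟩ := (hBbdd.isCompact_closure.prod
    hBbdd.isCompact_closure).exists_bound_of_continuousOn (continuous_Hker κ).continuousOn
  have hHint : ∀ x ∈ frontier B, ∀ j, Integrable (fun z => Hker κ x z * (ν z j : ℂ)) σb := by
    intro x hx j
    refine (hνint j).bdd_mul (c := C)
      ((continuous_Hker κ).comp (Continuous.prodMk_right x)).aestronglyMeasurable ?_
    filter_upwards [hfr] with z hz
    exact hC (x, z) ⟨frontier_subset_closure hx, frontier_subset_closure hz⟩
  have hHint2 : ∀ i j,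
      Integrable (fun x => (ν x i : ℂ) * ∫ z, Hker κ x z * (ν z j : ℂ) ∂σb) σb := by
    intro i j
    refine (hνint i).mul_bdd (c := ∫ z, C * ‖(ν z j : ℂ)‖ ∂σb) ?_ ?_
    · have hm : AEStronglyMeasurable
          (fun p : EuclideanSpace ℝ (Fin 3) × EuclideanSpace ℝ (Fin 3) =>
            Hker κ p.1 p.2 * (ν p.2 j : ℂ)) (σb.prod σb) :=
        (continuous_Hker κ).aestronglyMeasurable.mul ((hνint j).comp_snd σb).1
      exact hm.integral_prod_right'
    · filter_upwards [hfr] with x hx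
      refine norm_integral_le_of_norm_le ((hνint j).norm.const_mul C) ?_
      filter_upwards [hfr] with z hz
      rw [norm_mul]
      gcongr
      exact hC (x, z) ⟨frontier_subset_closure hx, frontier_subset_closure hz⟩
  have hrhs : ∑ i : Fin 3, ∑ j : Fin 3, ((c i : ℝ) : ℂ) * M i j * (c j : ℝ)
      = ∫ z, g z * ∫ x, Hker κ x z * g x ∂σb ∂σb := by
    have h1 : ∀ i j, ((c i : ℝ) : ℂ) * M i j * (c j : ℝ)
        = ∫ x, (c i : ℂ) * (c j : ℂ) * ((ν x i : ℂ) * ∫ z, Hker κ x z * (ν z j : ℂ) ∂σb) ∂σb := by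
      intro i j
      rw [integral_const_mul, hM, mul_right_comm]
      congr 1
      refine integral_congr_ae (ae_of_all _ fun x => ?_)
      simp only [← integral_const_mul]
      exact integral_congr_ae (ae_of_all _ fun z => by ring)
    simp only [h1]
    have h2 : ∀ i j, Integrable (fun x => (c i : ℂ) * (c j : ℂ) *
        ((ν x i : ℂ) * ∫ z, Hker κ x z * (ν z j : ℂ) ∂σb)) σb :=
      fun i j => (hHint2 i j).const_mul _
    have h3 : ∀ i, ∑ j, ∫ x, (c i : ℂ) * (c j : ℂ) *
        ((ν x i : ℂ) * ∫ z, Hker κ x z * (ν z j : ℂ) ∂σb) ∂σb = ∫ x, ∑ j, (c i : ℂ) * (c j : ℂ) *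
        ((ν x i : ℂ) * ∫ z, Hker κ x z * (ν z j : ℂ) ∂σb) ∂σb :=
      fun i => (integral_finsetSum _ fun j _ => h2 i j).symm
    simp only [h3]
    rw [← integral_finsetSum _ fun i _ => integrable_finsetSum _ fun j _ => h2 i j]
    refine integral_congr_ae ?_
    filter_upwards [hfr] with x hx
    have h4 : ∫ z, Hker κ z x * g z ∂σb
        = ∑ j, (c j : ℂ) * ∫ z, Hker κ x z * (ν z j : ℂ) ∂σb := by
      simp only [← integral_const_mul]
      rw [← integral_finsetSum _ fun j _ => (hHint x hx j).const_mul _]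
      refine integral_congr_ae (ae_of_all _ fun z => ?_)
      simp only [hg, Finset.mul_sum, Hker_comm κ z x]
      exact Finset.sum_congr rfl fun j _ => by ring
    rw [h4, hg, Finset.sum_mul_sum]
    exact Finset.sum_congr rfl fun i _ => Finset.sum_congr rfl fun j _ => by ring
  have hfinal : -(∫ x in B, ∑ j : Fin 3,
      fderiv ℝ (w c) x (EuclideanSpace.single j 1) * (c j : ℝ))
      = ∑ i : Fin 3, ∑ j : Fin 3, ((c i : ℝ) : ℂ) * M i j * (c j : ℝ) := by
    rw [hlhs, hrhs, neg_neg]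
  refine ⟨fun x hx => (hwd x hx).differentiableAt, ?_, hfinal⟩
  rw [integral_neg, hfinal]
end
end
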